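/- arXiv:1708.04310 — 3 statements merged into one kernel-verified Lean document; each statement's English description precedes it below -/
import Mathlib

section
/- Let p ≥ 1, let δ(ζ) = Σ_{j=0}^p δ_j ζ^j and μ(ζ) = Σ_{j=0}^p μ_j ζ^j be real polynomials of degree at most p (at least one of them of degree exactly p) that have no common divisor, and suppose that μ(ζ) ≠ 0 and Re(δ(ζ)/μ(ζ)) > 0 for every complex ζ with |ζ| < 1. Then there exists a symmetric positive definite matrix G = (g_{ij}) ∈ ℝ^{p×p} such that for every N ≥ 1, every inner product ⟨·,·⟩ on ℝ^N, and all vectors w_0, …, w_p ∈ ℝ^N, one has ⟨Σ_{i=0}^p δ_i w_{p−i}, Σ_{i=0}^p μ_i w_{p−i}⟩ ≥ Σ_{i,j=1}^p g_{ij} ⟨w_i, w_j⟩ − Σ_{i,j=1}^p g_{ij} ⟨w_{i−1}, w_{j−1}⟩. -/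
open Matrix

/-!
View `w` as the trajectory of a discrete-time system with state `(w 0, …, w (p - 1))`; the matrix
`G` sought is a quadratic storage function for the supply rate `⟨δw, μw⟩`. Since the sums in the
theorem run through `w` backwards, the polynomials in the shift operator are the reflections `ρ`,
`σ` of `δ`, `μ`.

*Energy balance.* On the unit circle `Re (ρ conj σ) ≥ 0`, so by Fejér–Riesz it equals `|a|²` for a
single real polynomial `a`. The Hermitian form `Re (ρ conj σ) - |a|²` vanishes on the circle, hence
so do the sums of its coefficients along diagonals, and their partial sums define a symmetric `G`
with `⟨ρw, σw⟩ = V (n + 1) - V n + ⟨aw, aw⟩`, where `V n` is the energy stored at time `n`.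

*Positive definiteness.* Start the recurrence `(ρ + σ)w = 0` from an arbitrary state. It decays,
because a zero of `δ + μ` in the closed unit disk would be a common zero of `δ` and `μ`. Along it
the supply is `-(σw)²`, so `V` decreases to `0` and is nonnegative. If `V` starts at `0`, then
`σw = ρw = 0` throughout, and coprimality forces `w = 0`.
-/

open Polynomial
open scoped ComplexConjugate

/-! ### Fejér–Riesz factorization on the circle -/

lemma nonneg_on_Icc_of_mul_nonneg {f q : ℝ[X]} {a b : ℝ} (hab : a < b) (hf0 : f ≠ 0)
    (hf : ∀ x ∈ Set.Icc a b, 0 ≤ f.eval x) (hfq : ∀ x ∈ Set.Icc a b, 0 ≤ (f * q).eval x) :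
    ∀ x ∈ Set.Icc a b, 0 ≤ q.eval x := by
  have hdense : Dense (f.rootSet ℝ)ᶜ := (f.rootSet_finite ℝ).countable.dense_compl ℝ
  have hsub : Set.Icc a b ⊆ closure (Set.Ioo a b ∩ (f.rootSet ℝ)ᶜ) := by
    rw [← closure_Ioo hab.ne]
    exact closure_minimal (hdense.open_subset_closure_inter isOpen_Ioo) isClosed_closure
  refine fun x hx => closure_minimal (fun y hy => ?_)
    (isClosed_le continuous_const q.continuous) (hsub hx)
  have hy' : y ∈ Set.Icc a b := Set.Ioo_subset_Icc_self hy.1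
  have hfy : f.eval y ≠ 0 := fun h => hy.2 <| by simpa [mem_rootSet, hf0] using h
  refine nonneg_of_mul_nonneg_right ?_ ((hf y hy').lt_of_ne' hfy)
  simpa using hfq y hy'

lemma sq_X_sub_C_dvd_of_isLocalMin {e : ℝ[X]} (he : e ≠ 0) {c : ℝ} (hc : e.IsRoot c)
    (hmin : IsLocalMin (fun x => e.eval x) c) : (X - C c) ^ 2 ∣ e := by
  have hderiv : (derivative e).IsRoot c := by
    simpa using hmin.deriv_eq_zero
  exact (le_rootMultiplicity_iff he).mp ((one_lt_rootMultiplicity_iff_isRoot he).mpr ⟨hc, hderiv⟩)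

/-- The real quadratic `(X - ζ)(X - conj ζ)`, which is `(X - ζ)²` for real `ζ`. -/
noncomputable def conjQuadratic (ζ : ℂ) : ℝ[X] :=
  X ^ 2 - C (2 * ζ.re) * X + C (‖ζ‖ ^ 2)

lemma natDegree_conjQuadratic (ζ : ℂ) : (conjQuadratic ζ).natDegree = 2 := by
  unfold conjQuadratic
  compute_degree!

lemma aeval_conjQuadratic (ζ z : ℂ) : aeval z (conjQuadratic ζ) = (z - ζ) * (z - conj ζ) := by
  have htrace : ((2 * ζ.re : ℝ) : ℂ) = ζ + conj ζ := by
    rw [Complex.add_conj]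
  have hnorm : ((‖ζ‖ ^ 2 : ℝ) : ℂ) = ζ * conj ζ := by
    rw [Complex.mul_conj']; push_cast; rfl
  rw [conjQuadratic, map_add, map_sub, map_mul, map_pow, aeval_X, aeval_C, aeval_C,
    Complex.coe_algebraMap, htrace, hnorm]
  ring

lemma conjQuadratic_ofReal (c : ℝ) : conjQuadratic c = (X - C c) ^ 2 := by
  simp only [conjQuadratic, Complex.ofReal_re, Complex.norm_real, Real.norm_eq_abs, sq_abs,
    map_mul, map_pow, map_ofNat]
  ring

lemma eval_conjQuadratic (ζ : ℂ) (x : ℝ) : (conjQuadratic ζ).eval x = ‖(x : ℂ) - ζ‖ ^ 2 := by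
  have h := aeval_conjQuadratic ζ x
  have hconj : (x : ℂ) - conj ζ = conj ((x : ℂ) - ζ) := by simp
  rw [hconj, Complex.mul_conj', ← Complex.coe_algebraMap, aeval_algebraMap_apply] at h
  exact_mod_cast h

/-- On the unit circle `z (z - 2 Re z) = -1`, so `2z (Re z - ζ) = (z - r)(z - r⁻¹)`. -/
lemma norm_re_sub_eq {r ζ z : ℂ} (hr : r ≠ 0) (hrζ : r + r⁻¹ = 2 * ζ) (hz : ‖z‖ = 1) :
    ‖(z.re : ℂ) - ζ‖ = ‖z - r‖ * ‖z - conj r‖ / (2 * ‖r‖) := by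
  have hzz : z * conj z = 1 := by simp [Complex.mul_conj', hz]
  have hfactor : 2 * z * r * ((z.re : ℂ) - ζ) = -((z - r) * (z * conj (z - conj r))) := by
    have hre : 2 * (z.re : ℂ) = z + conj z := by rw [Complex.add_conj]; push_cast; rfl
    have hζ : 2 * ζ * r = r ^ 2 + 1 := by rw [← hrζ]; field_simp
    simp only [map_sub, Complex.conj_conj]
    linear_combination z * r * hre - z * hζ + z * hzz
  have hnorm := congrArg norm hfactor
  simp only [norm_mul, norm_neg, Complex.norm_conj, hz, Complex.norm_ofNat] at hnorm
  rw [eq_div_iff (by positivity)]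
  linarith

lemma exists_natDegree_le_one_abs_re_sub {c : ℝ} (hc : 1 ≤ |c|) :
    ∃ a : ℝ[X], a.natDegree ≤ 1 ∧ ∀ z : ℂ, ‖z‖ = 1 → |z.re - c| = ‖aeval z a‖ ^ 2 := by
  obtain ⟨r, hr, hrc⟩ : ∃ r : ℝ, r ≠ 0 ∧ r + r⁻¹ = 2 * c := by
    have hdisc : √(c ^ 2 - 1) ^ 2 = c ^ 2 - 1 :=
      Real.sq_sqrt (sub_nonneg.mpr ((one_le_sq_iff_one_le_abs c).mpr hc))
    have hprod : (c + √(c ^ 2 - 1)) * (c - √(c ^ 2 - 1)) = 1 := by linear_combination -hdisc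
    refine ⟨_, left_ne_zero_of_mul_eq_one hprod, ?_⟩
    rw [inv_eq_of_mul_eq_one_right hprod]
    ring
  refine ⟨C √(2 * |r|)⁻¹ * (X - C r), ?_, fun z hz => ?_⟩
  · compute_degree
  · have h := norm_re_sub_eq (r := r) (ζ := c) (by exact_mod_cast hr) (by exact_mod_cast hrc) hz
    rw [← Complex.ofReal_sub, Complex.norm_real, Real.norm_eq_abs] at h
    have hscale : ‖aeval z (C √(2 * |r|)⁻¹)‖ ^ 2 = (2 * |r|)⁻¹ := by
      rw [aeval_C, Complex.coe_algebraMap, Complex.norm_real, Real.norm_eq_abs, sq_abs,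
        Real.sq_sqrt (by positivity)]
    rw [h, map_mul, norm_mul, mul_pow, hscale, map_sub, aeval_X, aeval_C, Complex.coe_algebraMap,
      Complex.conj_ofReal, Complex.norm_real, Real.norm_eq_abs]
    ring

lemma exists_natDegree_le_two_sq_norm_re_sub (ζ : ℂ) :
    ∃ a : ℝ[X], a.natDegree ≤ 2 ∧
      ∀ z : ℂ, ‖z‖ = 1 → ‖(z.re : ℂ) - ζ‖ ^ 2 = ‖aeval z a‖ ^ 2 := by
  obtain ⟨r, hr⟩ : ∃ r : ℂ, r * r - 2 * ζ * r + 1 = 0 := by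
    obtain ⟨s, hs⟩ := IsAlgClosed.exists_pow_nat_eq (ζ ^ 2 - 1) two_pos
    exact ⟨ζ + s, by linear_combination hs⟩
  have hr0 : r ≠ 0 := by rintro rfl; simp at hr
  have hrζ : r + r⁻¹ = 2 * ζ := by
    field_simp
    linear_combination hr
  refine ⟨C (2 * ‖r‖)⁻¹ * conjQuadratic r, ?_, fun z hz => ?_⟩
  · exact (natDegree_C_mul_le _ _).trans (natDegree_conjQuadratic r).le
  · rw [norm_re_sub_eq hr0 hrζ hz, map_mul, aeval_conjQuadratic]
    simp only [aeval_C, Complex.coe_algebraMap, norm_mul, Complex.norm_real, norm_inv, norm_norm,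
      Real.norm_ofNat]
    ring

/-- `e(Re z) = |a(z)|²` on the unit circle for some real polynomial `a` of degree at most `n`:
the trigonometric polynomial `e(cos θ)` has a spectral factor. -/
def IsCircleNormSq (n : ℕ) (e : ℝ[X]) : Prop :=
  ∃ a : ℝ[X], a.natDegree ≤ n ∧ ∀ z : ℂ, ‖z‖ = 1 → e.eval z.re = ‖aeval z a‖ ^ 2

namespace IsCircleNormSq

lemma mul {m n : ℕ} {e f : ℝ[X]} (he : IsCircleNormSq m e) (hf : IsCircleNormSq n f) :
    IsCircleNormSq (m + n) (e * f) := by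
  obtain ⟨a, ha, hea⟩ := he
  obtain ⟨b, hb, hfb⟩ := hf
  refine ⟨a * b, natDegree_mul_le.trans (add_le_add ha hb), fun z hz => ?_⟩
  rw [eval_mul, hea z hz, hfb z hz, map_mul, norm_mul, mul_pow]

lemma const {c : ℝ} (hc : 0 ≤ c) : IsCircleNormSq 0 (C c) :=
  ⟨C √c, natDegree_C _ |>.le, fun z _ => by simp [Real.sq_sqrt hc]⟩

lemma conjQuadratic (ζ : ℂ) : IsCircleNormSq 2 (conjQuadratic ζ) := by
  obtain ⟨a, ha, h⟩ := exists_natDegree_le_two_sq_norm_re_sub ζ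
  exact ⟨a, ha, fun z hz => by rw [eval_conjQuadratic, h z hz]⟩

end IsCircleNormSq

lemma re_mem_Icc_of_norm_eq_one {z : ℂ} (hz : ‖z‖ = 1) : z.re ∈ Set.Icc (-1 : ℝ) 1 :=
  abs_le.mp (hz ▸ Complex.abs_re_le_norm z)

lemma exists_linear_factor {e : ℝ[X]} {c : ℝ} (hc : 1 ≤ |c|) (hroot : e.IsRoot c) :
    ∃ f, f ∣ e ∧ f.natDegree = 1 ∧ (∀ x ∈ Set.Icc (-1 : ℝ) 1, 0 ≤ f.eval x) ∧
      IsCircleNormSq 1 f := by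
  have hdvd : X - C c ∣ e := dvd_iff_isRoot.mpr hroot
  obtain ⟨a, ha, hza⟩ := exists_natDegree_le_one_abs_re_sub hc
  suffices h : ∃ f, f ∣ e ∧ f.natDegree = 1 ∧
      ∀ x ∈ Set.Icc (-1 : ℝ) 1, f.eval x = |x - c| by
    obtain ⟨f, hfe, hdeg, hf⟩ := h
    refine ⟨f, hfe, hdeg, fun x hx => hf x hx ▸ abs_nonneg _, a, ha, fun z hz => ?_⟩
    rw [hf _ (re_mem_Icc_of_norm_eq_one hz), hza z hz]
  rcases le_abs'.mp hc with hc | hc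
  · refine ⟨X - C c, hdvd, natDegree_X_sub_C c, fun x hx => ?_⟩
    rw [abs_of_nonneg (by linarith [hx.1])]
    simp
  · refine ⟨-(X - C c), neg_dvd.mpr hdvd, by rw [natDegree_neg, natDegree_X_sub_C], fun x hx => ?_⟩
    rw [abs_of_nonpos (by linarith [hx.2])]
    simp

lemma exists_quadratic_factor {e : ℝ[X]} {ζ : ℂ} (h : conjQuadratic ζ ∣ e) :
    ∃ f, f ∣ e ∧ f.natDegree = 2 ∧ (∀ x ∈ Set.Icc (-1 : ℝ) 1, 0 ≤ f.eval x) ∧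
      IsCircleNormSq 2 f :=
  ⟨conjQuadratic ζ, h, natDegree_conjQuadratic ζ,
    fun x _ => eval_conjQuadratic ζ x ▸ sq_nonneg _, .conjQuadratic ζ⟩

/-- A real root inside `(-1, 1)` is a minimum of `e`, hence double. -/
lemma exists_isCircleNormSq_dvd {e : ℝ[X]} (hdeg : 0 < e.natDegree)
    (he : ∀ x ∈ Set.Icc (-1 : ℝ) 1, 0 ≤ e.eval x) :
    ∃ f, f ∣ e ∧ 0 < f.natDegree ∧ (∀ x ∈ Set.Icc (-1 : ℝ) 1, 0 ≤ f.eval x) ∧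
      IsCircleNormSq f.natDegree f := by
  have he0 : e ≠ 0 := ne_zero_of_natDegree_gt hdeg
  obtain ⟨ζ, hζ⟩ : ∃ ζ : ℂ, aeval ζ e = 0 :=
    IsAlgClosed.exists_aeval_eq_zero ℂ e (natDegree_pos_iff_degree_pos.mp hdeg).ne'
  suffices h : (∃ c : ℝ, 1 ≤ |c| ∧ e.IsRoot c) ∨ conjQuadratic ζ ∣ e by
    obtain ⟨c, hc, hroot⟩ | hdvd := h
    · obtain ⟨f, hfe, hf1, hf⟩ := exists_linear_factor hc hroot
      exact ⟨f, hfe, by simp [hf1], hf1 ▸ hf⟩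
    · obtain ⟨f, hfe, hf2, hf⟩ := exists_quadratic_factor hdvd
      exact ⟨f, hfe, by simp [hf2], hf2 ▸ hf⟩
  by_cases him : ζ.im = 0
  · lift ζ to ℝ using him
    have hroot : e.IsRoot ζ := by
      rw [← Complex.coe_algebraMap, aeval_algebraMap_apply] at hζ
      simpa using hζ
    refine (le_or_gt 1 |ζ|).imp (fun h => ⟨ζ, h, hroot⟩) fun h => ?_
    rw [conjQuadratic_ofReal]
    refine sq_X_sub_C_dvd_of_isLocalMin he0 hroot ?_
    filter_upwards [Icc_mem_nhds (abs_lt.mp h).1 (abs_lt.mp h).2] with x hx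
    rw [hroot.eq_zero]
    exact he x hx
  · exact .inr (quadratic_dvd_of_aeval_eq_zero_im_ne_zero e hζ him)

/-- **Fejér–Riesz factorization**, for real even trigonometric polynomials `e(cos θ)`. -/
theorem isCircleNormSq_natDegree {e : ℝ[X]} (he : ∀ x ∈ Set.Icc (-1 : ℝ) 1, 0 ≤ e.eval x) :
    IsCircleNormSq e.natDegree e := by
  induction hn : e.natDegree using Nat.strong_induction_on generalizing e with
  | _ n ih =>
  obtain rfl | hpos := Nat.eq_zero_or_pos n
  · obtain ⟨c, rfl⟩ := natDegree_eq_zero.mp hn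
    exact .const (by simpa using he 0 (by norm_num))
  obtain ⟨f, ⟨q, rfl⟩, hf_deg, hf_nonneg, hf⟩ := exists_isCircleNormSq_dvd (hn ▸ hpos) he
  have hfq : f * q ≠ 0 := ne_zero_of_natDegree_gt (hn ▸ hpos)
  have hf0 := left_ne_zero_of_mul hfq
  rw [natDegree_mul hf0 (right_ne_zero_of_mul hfq)] at hn
  have hq := nonneg_on_Icc_of_mul_nonneg (by norm_num) hf0 hf_nonneg he
  exact hn ▸ hf.mul (ih q.natDegree (by omega) hq rfl)

/-- On the unit circle `z ^ n = exp (n θ i)` has real part `cos (n θ) = T n (cos θ)`. -/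
lemma eval_chebyshevT_re {z : ℂ} (hz : ‖z‖ = 1) (n : ℤ) :
    (Chebyshev.T ℝ n).eval z.re = (z ^ n).re := by
  obtain ⟨θ, -, rfl⟩ := Complex.norm_eq_one_iff'.mp hz
  rw [Complex.exp_ofReal_mul_I_re, Chebyshev.T_real_cos, ← Complex.exp_int_mul, ← mul_assoc,
    ← Complex.ofReal_intCast, ← Complex.ofReal_mul, Complex.exp_ofReal_mul_I_re]

lemma aeval_mul_conj_aeval {p : ℕ} {q r : ℝ[X]} (hq : q.natDegree ≤ p) (hr : r.natDegree ≤ p)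
    (z : ℂ) : aeval z q * conj (aeval z r) =
      ∑ i ∈ Finset.range (p + 1), ∑ j ∈ Finset.range (p + 1),
        (q.coeff i * r.coeff j) • (z ^ i * conj z ^ j) := by
  rw [← aeval_conj, aeval_eq_sum_range' (Nat.lt_succ_of_le hq),
    aeval_eq_sum_range' (Nat.lt_succ_of_le hr), Finset.sum_mul_sum]
  simp only [smul_mul_smul_comm]

lemma exists_eval_re_eq_re_mul_conj {p : ℕ} {q r : ℝ[X]} (hq : q.natDegree ≤ p)
    (hr : r.natDegree ≤ p) :
    ∃ e : ℝ[X], e.natDegree ≤ p ∧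
      ∀ z : ℂ, ‖z‖ = 1 → e.eval z.re = (aeval z q * conj (aeval z r)).re := by
  refine ⟨∑ i ∈ Finset.range (p + 1), ∑ j ∈ Finset.range (p + 1),
    C (q.coeff i * r.coeff j) * Chebyshev.T ℝ (i - j), ?_, fun z hz => ?_⟩
  · refine natDegree_sum_le_of_forall_le _ _ fun i hi => natDegree_sum_le_of_forall_le _ _
      fun j hj => (natDegree_C_mul_le _ _).trans ?_
    rw [Chebyshev.natDegree_T]
    have := Finset.mem_range.mp hi
    have := Finset.mem_range.mp hj
    omega
  · have hz0 : z ≠ 0 := norm_ne_zero_iff.mp (by simp [hz])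
    have hpow (i j : ℕ) : z ^ i * conj z ^ j = z ^ ((i : ℤ) - j) := by
      rw [← Complex.inv_eq_conj hz, zpow_sub₀ hz0, inv_pow, zpow_natCast, zpow_natCast,
        div_eq_mul_inv]
    simp only [aeval_mul_conj_aeval hq hr, hpow, eval_finsetSum, eval_mul, eval_C,
      eval_chebyshevT_re hz, Complex.re_sum, Complex.smul_re, smul_eq_mul]

lemma exists_re_mul_conj_eq_norm_sq {p : ℕ} {ρ σ : ℝ[X]} (hρ : ρ.natDegree ≤ p)
    (hσ : σ.natDegree ≤ p)
    (hre : ∀ z : ℂ, ‖z‖ = 1 → 0 ≤ (aeval z ρ * conj (aeval z σ)).re) :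
    ∃ a : ℝ[X], a.natDegree ≤ p ∧
      ∀ z : ℂ, ‖z‖ = 1 → (aeval z ρ * conj (aeval z σ)).re = ‖aeval z a‖ ^ 2 := by
  obtain ⟨e, hep, he⟩ := exists_eval_re_eq_re_mul_conj hρ hσ
  have he_nonneg : ∀ x ∈ Set.Icc (-1 : ℝ) 1, 0 ≤ e.eval x := by
    intro x hx
    have hz : ‖Complex.exp (Real.arccos x * Complex.I)‖ = 1 := Complex.norm_exp_ofReal_mul_I _
    have h := he _ hz ▸ hre _ hz
    rwa [Complex.exp_ofReal_mul_I_re, Real.cos_arccos hx.1 hx.2] at h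
  obtain ⟨a, ha, hea⟩ := isCircleNormSq_natDegree he_nonneg
  exact ⟨a, ha.trans hep, fun z hz => by rw [← he z hz, hea z hz]⟩

/-! ### Telescoping along diagonals -/

/-- The partial sum `T i j + T (i - 1) (j - 1) + ⋯` of a two-dimensional array along a diagonal,
from its border up to the entry `(i, j)`. -/
def diagSum {R : Type*} [Add R] (T : ℕ → ℕ → R) : ℕ → ℕ → R
  | 0, j => T 0 j
  | i + 1, 0 => T (i + 1) 0
  | i + 1, j + 1 => T (i + 1) (j + 1) + diagSum T i j

lemma diagSum_comm {R : Type*} [Add R] {T : ℕ → ℕ → R} (hT : ∀ i j, T i j = T j i) :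
    ∀ i j, diagSum T i j = diagSum T j i
  | 0, 0 => rfl
  | 0, j + 1 => hT 0 (j + 1)
  | i + 1, 0 => hT (i + 1) 0
  | i + 1, j + 1 => by rw [diagSum, diagSum, hT, diagSum_comm hT i j]

section DiagSum

variable {R M : Type*} [Ring R] [AddCommGroup M] [Module R M]

lemma sum_smul_eq_sum_diagSum_sub (T : ℕ → ℕ → R) (b : ℕ → ℕ → M) (p : ℕ) :
    ∑ i ∈ Finset.range (p + 1), ∑ j ∈ Finset.range (p + 1), T i j • b i j =
      ∑ i ∈ Finset.range (p + 1), ∑ j ∈ Finset.range (p + 1), diagSum T i j • b i j -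
        ∑ i ∈ Finset.range p, ∑ j ∈ Finset.range p, diagSum T i j • b (i + 1) (j + 1) := by
  simp only [Finset.sum_range_succ', diagSum, add_smul, Finset.sum_add_distrib]
  abel

lemma sum_smul_eq_sum_diagSum_smul_sub {T : ℕ → ℕ → R} {p : ℕ}
    (hrow : ∀ j ≤ p, diagSum T p j = 0) (hcol : ∀ i ≤ p, diagSum T i p = 0) (b : ℕ → ℕ → M) :
    ∑ i ∈ Finset.range (p + 1), ∑ j ∈ Finset.range (p + 1), T i j • b i j =
      ∑ i ∈ Finset.range p, ∑ j ∈ Finset.range p,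
        diagSum T i j • (b i j - b (i + 1) (j + 1)) := by
  have hlast : ∑ j ∈ Finset.range (p + 1), diagSum T p j • b p j = 0 :=
    Finset.sum_eq_zero fun j hj => by
      rw [hrow j (Finset.mem_range_succ_iff.mp hj), zero_smul]
  have hinner : ∀ i ∈ Finset.range p, ∑ j ∈ Finset.range (p + 1), diagSum T i j • b i j =
      ∑ j ∈ Finset.range p, diagSum T i j • b i j := fun i hi => by
    rw [Finset.sum_range_succ, hcol i (Finset.mem_range.mp hi).le, zero_smul, add_zero]
  rw [sum_smul_eq_sum_diagSum_sub, Finset.sum_range_succ, hlast, add_zero,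
    Finset.sum_congr rfl hinner]
  simp only [smul_sub, Finset.sum_sub_distrib]

end DiagSum

lemma eq_zero_of_aeval_eq_zero_on_circle {P : ℝ[X]} (hP : ∀ z : ℂ, ‖z‖ = 1 → aeval z P = 0) :
    P = 0 := by
  have hinf : (Metric.sphere (0 : ℂ) 1).Infinite :=
    (isPreconnected_sphere (by simp) 0 1).infinite_of_nontrivial
      ⟨1, by simp, -1, by simp, by norm_num⟩
  refine (Polynomial.map_eq_zero (algebraMap ℝ ℂ)).mp
    (eq_zero_of_infinite_isRoot _ (hinf.mono fun z hz => ?_))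
  simpa [IsRoot.def, eval_map_algebraMap] using hP z (by simpa using hz)

/-- On the circle `z ^ i * conj z ^ j` is constant along diagonals, so the sum of `T` telescopes to
its last row and column, whose entries are then the coefficients of a vanishing polynomial. -/
lemma diagSum_border_eq_zero {T : ℕ → ℕ → ℝ} {p : ℕ}
    (hT : ∀ z : ℂ, ‖z‖ = 1 →
      ∑ i ∈ Finset.range (p + 1), ∑ j ∈ Finset.range (p + 1), T i j • (z ^ i * conj z ^ j) = 0) :
    (∀ j ≤ p, diagSum T p j = 0) ∧ ∀ i ≤ p, diagSum T i p = 0 := by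
  let P : ℝ[X] := ∑ i ∈ Finset.range p, monomial i (diagSum T i p) +
    ∑ k ∈ Finset.range (p + 1), monomial (p + k) (diagSum T p (p - k))
  have hP : P = 0 := by
    refine eq_zero_of_aeval_eq_zero_on_circle fun z hz => ?_
    have hzz : z * conj z = 1 := by simp [Complex.mul_conj', hz]
    have hdiag (i j : ℕ) : z ^ (i + 1) * conj z ^ (j + 1) = z ^ i * conj z ^ j := by
      rw [pow_succ, pow_succ, mul_mul_mul_comm, hzz, mul_one]
    have hcol (i : ℕ) : z ^ p * (z ^ i * conj z ^ p) = z ^ i := by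
      rw [mul_left_comm, ← mul_pow, hzz, one_pow, mul_one]
    have hrow {k : ℕ} (hk : k ≤ p) : z ^ p * (z ^ p * conj z ^ (p - k)) = z ^ (p + k) := by
      nth_rw 2 [← Nat.add_sub_of_le hk]
      rw [pow_add z k, mul_assoc (z ^ k), ← mul_pow, hzz, one_pow, mul_one, pow_add]
    have hT' : ∑ i ∈ Finset.range p, diagSum T i p • (z ^ i * conj z ^ p) +
        ∑ j ∈ Finset.range (p + 1), diagSum T p j • (z ^ p * conj z ^ j) = 0 := by
      rw [← hT z hz, sum_smul_eq_sum_diagSum_sub, Finset.sum_range_succ]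
      simp only [Finset.sum_range_succ _ p, Finset.sum_add_distrib, hdiag]
      abel
    rw [← Finset.sum_range_reflect _ (p + 1), add_tsub_cancel_right] at hT'
    rw [← mul_zero (z ^ p), ← hT', mul_add, Finset.mul_sum, Finset.mul_sum, map_add, map_sum,
      map_sum]
    congr 1
    · exact Finset.sum_congr rfl fun i _ => by
        rw [mul_smul_comm, hcol, aeval_monomial, Algebra.smul_def]
    · exact Finset.sum_congr rfl fun k hk => by
        rw [mul_smul_comm, hrow (Finset.mem_range_succ_iff.mp hk), aeval_monomial, Algebra.smul_def]
  have hrow (j : ℕ) (hj : j ≤ p) : diagSum T p j = 0 := by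
    have h := congrArg (fun Q => Q.coeff (p + (p - j))) hP
    simpa [P, finsetSum_coeff, coeff_monomial, Nat.sub_sub_self hj, Nat.lt_succ_iff] using h
  refine ⟨hrow, fun i hi => ?_⟩
  obtain rfl | hi := hi.eq_or_lt
  · exact hrow i le_rfl
  · have h := congrArg (fun Q => Q.coeff i) hP
    simpa [P, finsetSum_coeff, coeff_monomial, hi, (Nat.lt_add_right _ hi).ne'] using h

/-- The coefficients of the Hermitian form `Re (ρ(z) conj σ(z)) - |a(z)|²` in the powers of `z`. -/
noncomputable def supplyDefect (ρ σ a : ℝ[X]) (i j : ℕ) : ℝ :=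
  (ρ.coeff i * σ.coeff j + σ.coeff i * ρ.coeff j) / 2 - a.coeff i * a.coeff j

lemma supplyDefect_comm (ρ σ a : ℝ[X]) (i j : ℕ) :
    supplyDefect ρ σ a i j = supplyDefect ρ σ a j i := by
  unfold supplyDefect
  ring

lemma sum_supplyDefect_smul_eq {p : ℕ} {ρ σ a : ℝ[X]} (hρ : ρ.natDegree ≤ p)
    (hσ : σ.natDegree ≤ p) (ha : a.natDegree ≤ p) (z : ℂ) :
    ∑ i ∈ Finset.range (p + 1), ∑ j ∈ Finset.range (p + 1),
        supplyDefect ρ σ a i j • (z ^ i * conj z ^ j) =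
      (((aeval z ρ * conj (aeval z σ)).re - ‖aeval z a‖ ^ 2 : ℝ) : ℂ) := by
  have hre : ((aeval z ρ * conj (aeval z σ)).re : ℂ) =
      (2⁻¹ : ℝ) • (aeval z ρ * conj (aeval z σ) + aeval z σ * conj (aeval z ρ)) := by
    rw [Complex.re_eq_add_conj, Complex.real_smul]
    simp only [map_mul, Complex.conj_conj, Complex.ofReal_inv, Complex.ofReal_ofNat]
    ring
  rw [Complex.ofReal_sub, Complex.ofReal_pow, ← Complex.mul_conj', hre]
  simp only [aeval_mul_conj_aeval hρ hσ, aeval_mul_conj_aeval hσ hρ, aeval_mul_conj_aeval ha ha,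
    supplyDefect, ← Finset.sum_add_distrib, ← Finset.sum_sub_distrib, Finset.smul_sum, ← add_smul,
    smul_smul, ← sub_smul]
  exact Finset.sum_congr rfl fun i _ => Finset.sum_congr rfl fun j _ => by congr 1; ring

/-! ### The energy balance -/

/-- The forward shift `(wₙ) ↦ (wₙ₊₁)` on sequences, as a linear endomorphism, so that recurrences
become polynomials in it. -/
def seqShift (R M : Type*) [Semiring R] [AddCommMonoid M] [Module R M] : Module.End R (ℕ → M) :=
  LinearMap.funLeft R M Nat.succ

lemma seqShift_pow_apply {R M : Type*} [Semiring R] [AddCommMonoid M] [Module R M] (k : ℕ)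
    (w : ℕ → M) (n : ℕ) : (seqShift R M ^ k) w n = w (k + n) := by
  induction k generalizing n with
  | zero => simp
  | succ k ih =>
    rw [pow_succ', Module.End.mul_apply]
    change (seqShift R M ^ k) w (n + 1) = _
    rw [ih]
    congr 1; omega

section SeqShift

variable {R M : Type*} [CommSemiring R] [AddCommMonoid M] [Module R M]

lemma aeval_seqShift_apply {q : R[X]} {p : ℕ} (hq : q.natDegree ≤ p) (w : ℕ → M) (n : ℕ) :
    aeval (seqShift R M) q w n = ∑ i ∈ Finset.range (p + 1), q.coeff i • w (i + n) := by
  simp only [aeval_eq_sum_range' (Nat.lt_succ_of_le hq), LinearMap.sum_apply, Finset.sum_apply,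
    LinearMap.smul_apply, Pi.smul_apply, seqShift_pow_apply]

lemma bilin_aeval_seqShift_apply (B : LinearMap.BilinForm R M) {q r : R[X]} {p : ℕ}
    (hq : q.natDegree ≤ p) (hr : r.natDegree ≤ p) (w : ℕ → M) (n : ℕ) :
    B (aeval (seqShift R M) q w n) (aeval (seqShift R M) r w n) =
      ∑ i ∈ Finset.range (p + 1), ∑ j ∈ Finset.range (p + 1),
        (q.coeff i * r.coeff j) • B (w (i + n)) (w (j + n)) := by
  rw [aeval_seqShift_apply hq, aeval_seqShift_apply hr, LinearMap.map_sum₂]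
  simp only [map_sum, map_smul, LinearMap.smul_apply, smul_smul, mul_comm (r.coeff _)]

end SeqShift

/-- The energy `∑ Gᵢⱼ B(wₙ₊ᵢ, wₙ₊ⱼ)` stored at time `n` in the window of length `p` of `w`. -/
def storage {E : Type*} [AddCommGroup E] [Module ℝ E] {p : ℕ} (G : Matrix (Fin p) (Fin p) ℝ)
    (B : LinearMap.BilinForm ℝ E) (w : ℕ → E) (n : ℕ) : ℝ :=
  ∑ i : Fin p, ∑ j : Fin p, G i j * B (w (i + n)) (w (j + n))

/-- The matrix whose storage balances the supply `ρ, σ` against the dissipation `a`. The minus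
sign is there because the diagonal sums telescope to the energy lost, not gained, in one step. -/
noncomputable def storageMatrix (p : ℕ) (ρ σ a : ℝ[X]) : Matrix (Fin p) (Fin p) ℝ :=
  .of fun i j => -diagSum (supplyDefect ρ σ a) i j

lemma storageMatrix_isSymm (p : ℕ) (ρ σ a : ℝ[X]) : (storageMatrix p ρ σ a).IsSymm :=
  Matrix.IsSymm.ext fun i j => by
    simp only [storageMatrix, of_apply, diagSum_comm (supplyDefect_comm ρ σ a) i]

section EnergyBalance

variable {E : Type*} [AddCommGroup E] [Module ℝ E] {B : LinearMap.BilinForm ℝ E}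
  {p : ℕ} {ρ σ a : ℝ[X]}

lemma sum_supplyDefect_smul_bilin (hB : B.IsSymm) (hρ : ρ.natDegree ≤ p)
    (hσ : σ.natDegree ≤ p) (ha : a.natDegree ≤ p) (w : ℕ → E) (n : ℕ) :
    ∑ i ∈ Finset.range (p + 1), ∑ j ∈ Finset.range (p + 1),
        supplyDefect ρ σ a i j • B (w (i + n)) (w (j + n)) =
      B (aeval (seqShift ℝ E) ρ w n) (aeval (seqShift ℝ E) σ w n) -
        B (aeval (seqShift ℝ E) a w n) (aeval (seqShift ℝ E) a w n) := by
  have hsymm : B (aeval (seqShift ℝ E) ρ w n) (aeval (seqShift ℝ E) σ w n) = (2⁻¹ : ℝ) •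
      (B (aeval (seqShift ℝ E) ρ w n) (aeval (seqShift ℝ E) σ w n) +
        B (aeval (seqShift ℝ E) σ w n) (aeval (seqShift ℝ E) ρ w n)) := by
    rw [hB.eq (aeval (seqShift ℝ E) σ w n), smul_eq_mul]
    ring
  rw [hsymm]
  simp only [bilin_aeval_seqShift_apply B hρ hσ, bilin_aeval_seqShift_apply B hσ hρ,
    bilin_aeval_seqShift_apply B ha ha, supplyDefect, ← Finset.sum_add_distrib,
    ← Finset.sum_sub_distrib, Finset.smul_sum, ← add_smul, smul_smul, ← sub_smul]
  exact Finset.sum_congr rfl fun i _ => Finset.sum_congr rfl fun j _ => by congr 1; ring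

lemma energy_balance (hB : B.IsSymm) (hρ : ρ.natDegree ≤ p)
    (hσ : σ.natDegree ≤ p) (ha : a.natDegree ≤ p)
    (hfact : ∀ z : ℂ, ‖z‖ = 1 → (aeval z ρ * conj (aeval z σ)).re = ‖aeval z a‖ ^ 2)
    (w : ℕ → E) (n : ℕ) :
    B (aeval (seqShift ℝ E) ρ w n) (aeval (seqShift ℝ E) σ w n) =
      storage (storageMatrix p ρ σ a) B w (n + 1) - storage (storageMatrix p ρ σ a) B w n +
        B (aeval (seqShift ℝ E) a w n) (aeval (seqShift ℝ E) a w n) := by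
  obtain ⟨hrow, hcol⟩ := diagSum_border_eq_zero (T := supplyDefect ρ σ a) (p := p) fun z hz => by
    rw [sum_supplyDefect_smul_eq hρ hσ ha, hfact z hz, sub_self, Complex.ofReal_zero]
  rw [← sub_eq_iff_eq_add, ← sum_supplyDefect_smul_bilin hB hρ hσ ha,
    sum_smul_eq_sum_diagSum_smul_sub hrow hcol fun i j => B (w (i + n)) (w (j + n))]
  simp only [storage, storageMatrix, of_apply, ← Finset.sum_sub_distrib, Finset.sum_range]
  refine Finset.sum_congr rfl fun i _ => Finset.sum_congr rfl fun j _ => ?_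
  rw [add_right_comm, add_right_comm _ 1, add_assoc, add_assoc, smul_eq_mul]
  ring

end EnergyBalance

/-! ### Decay of solutions of recurrences -/

section Stability

open Filter Topology

lemma summable_norm_of_summable_norm_succ_sub_smul {𝕜 E : Type*} [NormedField 𝕜]
    [SeminormedAddCommGroup E] [NormedSpace 𝕜 E] {c : 𝕜} (hc : ‖c‖ < 1) {w : ℕ → E}
    (h : Summable fun n => ‖w (n + 1) - c • w n‖) : Summable fun n => ‖w n‖ := by
  set D := ∑' n, ‖w (n + 1) - c • w n‖
  refine summable_of_sum_range_le (c := (‖w 0‖ + D) / (1 - ‖c‖)) (fun _ => norm_nonneg _)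
    fun n => ?_
  rw [le_div_iff₀ (by linarith)]
  have hshift : ∑ i ∈ Finset.range n, ‖w i‖ ≤ ∑ i ∈ Finset.range n, ‖w (i + 1)‖ + ‖w 0‖ := by
    rw [← Finset.sum_range_succ' (fun i => ‖w i‖), Finset.sum_range_succ]
    exact le_add_of_nonneg_right (norm_nonneg _)
  have hstep : ∑ i ∈ Finset.range n, ‖w (i + 1)‖ ≤ D + ‖c‖ * ∑ i ∈ Finset.range n, ‖w i‖ :=
    calc ∑ i ∈ Finset.range n, ‖w (i + 1)‖
      _ ≤ ∑ i ∈ Finset.range n, (‖w (i + 1) - c • w i‖ + ‖c‖ * ‖w i‖) := by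
        refine Finset.sum_le_sum fun i _ => ?_
        rw [← norm_smul]
        exact norm_le_norm_sub_add _ _
      _ ≤ D + ‖c‖ * ∑ i ∈ Finset.range n, ‖w i‖ := by
        rw [Finset.sum_add_distrib, ← Finset.mul_sum]
        gcongr
        exact h.sum_le_tsum _ fun _ _ => norm_nonneg _
  linarith

lemma summable_norm_of_aeval_seqShift {𝕜 E : Type*} [NormedField 𝕜] [SeminormedAddCommGroup E]
    [NormedSpace 𝕜 E] {s : Multiset 𝕜} (hs : ∀ c ∈ s, ‖c‖ < 1) {w : ℕ → E}
    (h : Summable fun n => ‖aeval (seqShift 𝕜 E) (s.map fun c => X - C c).prod w n‖) :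
    Summable fun n => ‖w n‖ := by
  induction s using Multiset.induction_on generalizing w with
  | empty => simpa using h
  | cons c s ih =>
    rw [Multiset.map_cons, Multiset.prod_cons, mul_comm, map_mul, Module.End.mul_apply] at h
    have hdiff := ih (fun c hc => hs c (Multiset.mem_cons_of_mem hc)) h
    refine summable_norm_of_summable_norm_succ_sub_smul (hs c (Multiset.mem_cons_self c s)) ?_
    simpa [seqShift, LinearMap.funLeft] using hdiff

lemma tendsto_zero_of_aeval_seqShift_eq_zero {𝕜 E : Type*} [NormedField 𝕜] [NormedAddCommGroup E]
    [NormedSpace 𝕜 E] {γ : 𝕜[X]} (hγ : γ ≠ 0) (hsplit : γ.Splits)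
    (hroots : ∀ c, γ.IsRoot c → ‖c‖ < 1) {w : ℕ → E} (hw : aeval (seqShift 𝕜 E) γ w = 0) :
    Tendsto w atTop (𝓝 0) := by
  rw [hsplit.eq_prod_roots, map_mul, aeval_C, Module.End.mul_apply,
    Module.algebraMap_end_apply] at hw
  have hprod := (smul_eq_zero.mp hw).resolve_left (leadingCoeff_ne_zero.mpr hγ)
  have hsum : Summable fun n => ‖w n‖ :=
    summable_norm_of_aeval_seqShift (fun c hc => hroots c (isRoot_of_mem_roots hc))
      (by simp [hprod, summable_zero])
  exact tendsto_zero_iff_norm_tendsto_zero.mpr hsum.tendsto_atTop_zero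

lemma real_tendsto_zero_of_aeval_seqShift_eq_zero {γ : ℝ[X]} (hγ : γ ≠ 0)
    (hroots : ∀ c : ℂ, aeval c γ = 0 → ‖c‖ < 1) {w : ℕ → ℝ} (hw : aeval (seqShift ℝ ℝ) γ w = 0) :
    Tendsto w atTop (𝓝 0) := by
  have hcw : aeval (seqShift ℂ ℂ) (γ.map (algebraMap ℝ ℂ)) (fun n => (w n : ℂ)) = 0 := by
    funext n
    have h := congrArg Complex.ofReal (congrFun hw n)
    rw [aeval_seqShift_apply le_rfl] at h
    rw [aeval_seqShift_apply natDegree_map_le]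
    simpa using h
  have htendsto := tendsto_zero_of_aeval_seqShift_eq_zero
    ((Polynomial.map_ne_zero_iff (algebraMap ℝ ℂ).injective).mpr hγ) (IsAlgClosed.splits _)
    (fun c hc => hroots c (by rwa [IsRoot.def, eval_map_algebraMap] at hc)) hcw
  exact (Complex.continuous_re.tendsto 0).comp htendsto

end Stability

lemma exists_aeval_seqShift_eq_zero {K : Type*} [Field K] {p : ℕ} {γ : K[X]} (hγ : γ ≠ 0)
    (hdeg : γ.natDegree = p) (x : Fin p → K) :
    ∃ w : ℕ → K, (∀ i : Fin p, w i = x i) ∧ aeval (seqShift K K) γ w = 0 := by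
  let L : LinearRecurrence K := ⟨p, fun i => -γ.coeff i / γ.leadingCoeff⟩
  refine ⟨L.mkSol x, L.mkSol_eq_init x, funext fun n => ?_⟩
  have hsol : L.mkSol x (n + p) = ∑ i : Fin p, -γ.coeff i / γ.leadingCoeff * L.mkSol x (n + i) :=
    L.is_sol_mkSol x n
  rw [aeval_seqShift_apply hdeg.le, Finset.sum_range_succ, Finset.sum_range, add_comm p n, hsol,
    ← hdeg, coeff_natDegree, hdeg, Finset.smul_sum, ← Finset.sum_add_distrib]
  refine Finset.sum_eq_zero fun i _ => ?_
  have hlead := leadingCoeff_ne_zero.mpr hγ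
  rw [smul_eq_mul, smul_eq_mul, add_comm n]
  field_simp
  ring

/-! ### Positive definiteness of the storage -/

section PositiveDefinite

open Filter Topology

variable {p : ℕ} {ρ σ : ℝ[X]} {G : Matrix (Fin p) (Fin p) ℝ}

lemma tendsto_storage_zero (G : Matrix (Fin p) (Fin p) ℝ) {w : ℕ → ℝ}
    (hw : Tendsto w atTop (𝓝 0)) : Tendsto (storage G (LinearMap.mul ℝ ℝ) w) atTop (𝓝 0) := by
  have hshift (i : ℕ) : Tendsto (fun n => w (i + n)) atTop (𝓝 0) := by
    simpa only [add_comm] using (tendsto_add_atTop_iff_nat i).mpr hw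
  have h : Tendsto (storage G (LinearMap.mul ℝ ℝ) w) atTop
      (𝓝 (∑ i : Fin p, ∑ j : Fin p, G i j * (0 * 0))) :=
    tendsto_finsetSum _ fun i _ => tendsto_finsetSum _ fun j _ =>
      ((hshift i).mul (hshift j)).const_mul _
  simpa using h

lemma storage_mul_zero_eq (G : Matrix (Fin p) (Fin p) ℝ) (w : ℕ → ℝ) :
    storage G (LinearMap.mul ℝ ℝ) w 0 = (fun i : Fin p => w i) ⬝ᵥ G *ᵥ fun i : Fin p => w i := by
  simp only [storage, dotProduct, mulVec, Finset.mul_sum, LinearMap.mul_apply', add_zero]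
  exact Finset.sum_congr rfl fun i _ => Finset.sum_congr rfl fun j _ => by ring

/-- Along `(ρ + σ)w = 0` the supply is `-(σw)²`, so the storage decreases to its limit `0`; if it
vanishes identically, then `σw = 0 = ρw`. -/
lemma eq_zero_of_storage_nonpos (hcop : IsCoprime ρ σ)
    (hroots : ∀ c : ℂ, aeval c (ρ + σ) = 0 → ‖c‖ < 1)
    (hdiss : ∀ (w : ℕ → ℝ) (n : ℕ),
      storage G (LinearMap.mul ℝ ℝ) w (n + 1) - storage G (LinearMap.mul ℝ ℝ) w n ≤
        aeval (seqShift ℝ ℝ) ρ w n * aeval (seqShift ℝ ℝ) σ w n)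
    {w : ℕ → ℝ} (hw : aeval (seqShift ℝ ℝ) (ρ + σ) w = 0)
    (hstart : storage G (LinearMap.mul ℝ ℝ) w 0 ≤ 0) : w = 0 := by
  set V := storage G (LinearMap.mul ℝ ℝ) w
  have hγ : ρ + σ ≠ 0 := by
    intro h
    simpa using hroots 1 (by simp [h])
  have hρw : aeval (seqShift ℝ ℝ) ρ w = -aeval (seqShift ℝ ℝ) σ w := by
    rw [map_add, LinearMap.add_apply] at hw
    exact eq_neg_of_add_eq_zero_left hw
  have hstep (n : ℕ) : V (n + 1) + aeval (seqShift ℝ ℝ) σ w n ^ 2 ≤ V n := by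
    have h := hdiss w n
    rw [hρw, Pi.neg_apply] at h
    linarith
  have hanti : Antitone V := antitone_nat_of_succ_le fun n => by
    linarith [hstep n, sq_nonneg (aeval (seqShift ℝ ℝ) σ w n)]
  have hnonneg (n : ℕ) : 0 ≤ V n := hanti.le_of_tendsto
    (tendsto_storage_zero G (real_tendsto_zero_of_aeval_seqShift_eq_zero hγ hroots hw)) n
  have hzero (n : ℕ) : V n = 0 := le_antisymm ((hanti n.zero_le).trans hstart) (hnonneg n)
  have hσw : aeval (seqShift ℝ ℝ) σ w = 0 := funext fun n => by
    have h := hstep n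
    rw [hzero, hzero, zero_add] at h
    exact sq_nonpos_iff _ |>.mp h
  exact disjoint_ker_aeval_of_isCoprime (seqShift ℝ ℝ) hcop |>.le_bot
    ⟨hρw.trans (by rw [hσw, neg_zero]), hσw⟩

lemma posDef_of_storage_sub_le (hcop : IsCoprime ρ σ)
    (hroots : ∀ c : ℂ, aeval c (ρ + σ) = 0 → ‖c‖ < 1) (hdeg : (ρ + σ).natDegree = p)
    (hG : G.IsSymm)
    (hdiss : ∀ (w : ℕ → ℝ) (n : ℕ),
      storage G (LinearMap.mul ℝ ℝ) w (n + 1) - storage G (LinearMap.mul ℝ ℝ) w n ≤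
        aeval (seqShift ℝ ℝ) ρ w n * aeval (seqShift ℝ ℝ) σ w n) : G.PosDef := by
  have hγ : ρ + σ ≠ 0 := by
    intro h
    simpa using hroots 1 (by simp [h])
  refine Matrix.PosDef.of_dotProduct_mulVec_pos
    (G.conjTranspose_eq_transpose_of_trivial.trans hG) fun x hx => ?_
  obtain ⟨w, hwx, hw⟩ := exists_aeval_seqShift_eq_zero hγ hdeg x
  obtain rfl : (fun i : Fin p => w i) = x := funext hwx
  rw [star_trivial, ← storage_mul_zero_eq]
  by_contra! hstart
  exact hx (by simp [eq_zero_of_storage_nonpos hcop hroots hdiss hw hstart, Pi.zero_def])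

end PositiveDefinite

/-! ### Reversal of coefficients -/

section Reflect

variable {p : ℕ}

lemma natDegree_reflect_le_of_natDegree_le {R : Type*} [Semiring R] {f : R[X]}
    (hf : f.natDegree ≤ p) : (reflect p f).natDegree ≤ p :=
  natDegree_reflect_le.trans (max_le le_rfl hf)

lemma natDegree_reflect_eq {R : Type*} [Semiring R] {f : R[X]} (hf : f.natDegree ≤ p)
    (h0 : f.coeff 0 ≠ 0) : (reflect p f).natDegree = p :=
  (natDegree_reflect_le_of_natDegree_le hf).antisymm
    (le_natDegree_of_ne_zero (by rwa [coeff_reflect, revAt_le le_rfl, Nat.sub_self]))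

lemma aeval_reflect {R A : Type*} [CommSemiring R] [Field A] [Algebra R A] {f : R[X]}
    (hf : f.natDegree ≤ p) {z : A} (hz : z ≠ 0) :
    aeval z (reflect p f) = z ^ p * aeval z⁻¹ f := by
  have : Invertible z⁻¹ := invertibleOfNonzero (inv_ne_zero hz)
  have h := eval₂_reflect_mul_pow (algebraMap R A) z⁻¹ p f hf
  rw [invOf_eq_inv, inv_inv] at h
  rw [aeval_def, aeval_def, ← h, mul_left_comm, ← mul_pow, mul_inv_cancel₀ hz, one_pow, mul_one]

lemma sum_coeff_smul_eq_aeval_seqShift {R M : Type*} [CommSemiring R] [AddCommMonoid M] [Module R M]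
    {f : R[X]} (hf : f.natDegree ≤ p) (w : ℕ → M) :
    ∑ i ∈ Finset.range (p + 1), f.coeff i • w (p - i) =
      aeval (seqShift R M) (reflect p f) w 0 := by
  rw [aeval_seqShift_apply (natDegree_reflect_le_of_natDegree_le hf), ← Finset.sum_range_reflect]
  refine Finset.sum_congr rfl fun i hi => ?_
  have hi' : i ≤ p := Finset.mem_range_succ_iff.mp hi
  rw [coeff_reflect, revAt_le hi', add_tsub_cancel_right, Nat.sub_sub_self hi', add_zero]

lemma isCoprime_reflect {δ μ : ℝ[X]} (hδ : δ.natDegree ≤ p) (hμ : μ.natDegree ≤ p)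
    (hlead : δ.coeff p ≠ 0 ∨ μ.coeff p ≠ 0) (hcop : IsCoprime δ μ) :
    IsCoprime (reflect p δ) (reflect p μ) := by
  rw [isCoprime_iff_aeval_ne_zero_of_isAlgClosed ℝ ℂ] at hcop ⊢
  intro z
  obtain rfl | hz := eq_or_ne z 0
  · simpa [← coeff_zero_eq_aeval_zero', coeff_reflect] using hlead
  · simpa [aeval_reflect hδ hz, aeval_reflect hμ hz, hz] using hcop z⁻¹

lemma norm_lt_one_of_aeval_reflect_eq_zero {γ : ℝ[X]} (hγ : γ.natDegree ≤ p)
    (hdisk : ∀ z : ℂ, ‖z‖ ≤ 1 → aeval z γ ≠ 0) {z : ℂ} (hz : aeval z (reflect p γ) = 0) :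
    ‖z‖ < 1 := by
  by_contra! hz1
  have hz0 : z ≠ 0 := norm_pos_iff.mp (one_pos.trans_le hz1)
  rw [aeval_reflect hγ hz0, mul_eq_zero_iff_left (pow_ne_zero p hz0)] at hz
  exact hdisk z⁻¹ (by simpa using inv_le_one_of_one_le₀ hz1) hz

lemma aeval_reflect_mul_conj_aeval_reflect {δ μ : ℝ[X]} (hδ : δ.natDegree ≤ p)
    (hμ : μ.natDegree ≤ p) {z : ℂ} (hz : ‖z‖ = 1) :
    aeval z (reflect p δ) * conj (aeval z (reflect p μ)) =
      aeval z⁻¹ δ * conj (aeval z⁻¹ μ) := by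
  have hz0 : z ≠ 0 := norm_ne_zero_iff.mp (by simp [hz])
  rw [aeval_reflect hδ hz0, aeval_reflect hμ hz0, map_mul, mul_mul_mul_comm, Complex.mul_conj']
  simp [hz]

end Reflect

section UnitDisk

variable {δ μ : ℝ[X]}

lemma re_mul_conj_nonneg_of_norm_le_one
    (hre : ∀ z : ℂ, ‖z‖ < 1 → 0 ≤ (aeval z δ * conj (aeval z μ)).re) {z : ℂ} (hz : ‖z‖ ≤ 1) :
    0 ≤ (aeval z δ * conj (aeval z μ)).re := by
  have hclosed : IsClosed {z : ℂ | 0 ≤ (aeval z δ * conj (aeval z μ)).re} :=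
    isClosed_le continuous_const (by fun_prop)
  refine closure_minimal (s := Metric.ball 0 1) (fun w hw => hre w (by simpa using hw)) hclosed ?_
  rw [closure_ball _ one_ne_zero]
  simpa using hz

/-- At a zero of `δ + μ` one has `Re (δ conj μ) = -|μ|²`, so both `δ` and `μ` would vanish there. -/
lemma aeval_add_ne_zero_of_re_mul_conj_nonneg (hcop : IsCoprime δ μ) {z : ℂ}
    (hre : 0 ≤ (aeval z δ * conj (aeval z μ)).re) : aeval z (δ + μ) ≠ 0 := by
  intro hzero
  have hδμ : aeval z δ = -aeval z μ := eq_neg_of_add_eq_zero_left (by rwa [← map_add])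
  have hμ : aeval z μ = 0 := by
    rw [hδμ, neg_mul, Complex.mul_conj, Complex.neg_re, Complex.ofReal_re, neg_nonneg] at hre
    exact Complex.normSq_eq_zero.mp (hre.antisymm (Complex.normSq_nonneg _))
  have hcop' := (isCoprime_iff_aeval_ne_zero_of_isAlgClosed ℝ ℂ δ μ).mp hcop z
  simp [hδμ, hμ] at hcop'

lemma re_mul_conj_nonneg_of_re_div_nonneg {a b : ℂ} (h : 0 ≤ (a / b).re) :
    0 ≤ (a * conj b).re := by
  obtain rfl | hb := eq_or_ne b 0
  · simp
  have heq : a * conj b = (Complex.normSq b : ℂ) * (a / b) := by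
    rw [← Complex.mul_conj]
    field_simp
  rw [heq, Complex.re_ofReal_mul]
  exact mul_nonneg (Complex.normSq_nonneg b) h

end UnitDisk

/-! ### The main theorem -/

lemma isPosSemidef_toBilin' {n : Type*} [Fintype n] [DecidableEq n] {M : Matrix n n ℝ}
    (hM : M.PosSemidef) : M.toBilin'.IsPosSemidef where
  eq := (isSymm_toBilin'_iff_isSymm.mpr
    (M.conjTranspose_eq_transpose_of_trivial.symm.trans hM.isHermitian)).eq
  isNonneg := ⟨fun x => by simpa [toBilin'_apply'] using hM.dotProduct_mulVec_nonneg x⟩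

theorem exists_posDef_storage_sub_le {p : ℕ} {ρ σ : ℝ[X]} (hρ : ρ.natDegree ≤ p)
    (hσ : σ.natDegree ≤ p) (hdeg : (ρ + σ).natDegree = p) (hcop : IsCoprime ρ σ)
    (hre : ∀ z : ℂ, ‖z‖ = 1 → 0 ≤ (aeval z ρ * conj (aeval z σ)).re)
    (hroots : ∀ z : ℂ, aeval z (ρ + σ) = 0 → ‖z‖ < 1) :
    ∃ G : Matrix (Fin p) (Fin p) ℝ, G.PosDef ∧
      ∀ (E : Type*) [AddCommGroup E] [Module ℝ E] (B : LinearMap.BilinForm ℝ E), B.IsPosSemidef →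
        ∀ (w : ℕ → E) (n : ℕ), storage G B w (n + 1) - storage G B w n ≤
          B (aeval (seqShift ℝ E) ρ w n) (aeval (seqShift ℝ E) σ w n) := by
  obtain ⟨a, ha, hfact⟩ := exists_re_mul_conj_eq_norm_sq hρ hσ hre
  refine ⟨storageMatrix p ρ σ a, posDef_of_storage_sub_le hcop hroots hdeg
    (storageMatrix_isSymm p ρ σ a) fun w n => ?_, fun E _ _ B hB w n => ?_⟩
  · have hmul : LinearMap.BilinForm.IsSymm (LinearMap.mul ℝ ℝ) := ⟨fun x y => mul_comm x y⟩
    have h := energy_balance hmul hρ hσ ha hfact w n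
    simp only [LinearMap.mul_apply'] at h
    linarith [mul_self_nonneg (aeval (seqShift ℝ ℝ) a w n)]
  · rw [energy_balance hB.isSymm hρ hσ ha hfact]
    exact le_add_of_nonneg_right (hB.isNonneg.nonneg _)

theorem dahlquist_G_stability_general (p : ℕ) (δ μ : ℝ[X]) (hδ : δ.degree ≤ p) (hμ : μ.degree ≤ p)
    (hdeg : δ.degree = p ∨ μ.degree = p) (hcop : IsCoprime δ μ)
    (hre : ∀ z : ℂ, ‖z‖ < 1 → 0 ≤ (aeval z δ * conj (aeval z μ)).re) :
    ∃ G : Matrix (Fin p) (Fin p) ℝ, G.PosDef ∧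
      ∀ (E : Type*) [AddCommGroup E] [Module ℝ E] (B : LinearMap.BilinForm ℝ E), B.IsPosSemidef →
        ∀ w : ℕ → E,
          ∑ i : Fin p, ∑ j : Fin p, G i j * B (w (i + 1)) (w (j + 1)) -
              ∑ i : Fin p, ∑ j : Fin p, G i j * B (w i) (w j) ≤
            B (∑ i ∈ Finset.range (p + 1), δ.coeff i • w (p - i))
              (∑ i ∈ Finset.range (p + 1), μ.coeff i • w (p - i)) := by
  rw [← natDegree_le_iff_degree_le] at hδ hμ
  have hlead : δ.coeff p ≠ 0 ∨ μ.coeff p ≠ 0 := hdeg.imp coeff_ne_zero_of_eq_degree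
    coeff_ne_zero_of_eq_degree
  have hadd : (δ + μ).natDegree ≤ p := natDegree_add_le_of_degree_le hδ hμ
  have hclosed (z : ℂ) (hz : ‖z‖ ≤ 1) : 0 ≤ (aeval z δ * conj (aeval z μ)).re :=
    re_mul_conj_nonneg_of_norm_le_one hre hz
  have hdisk (z : ℂ) (hz : ‖z‖ ≤ 1) : aeval z (δ + μ) ≠ 0 :=
    aeval_add_ne_zero_of_re_mul_conj_nonneg hcop (hclosed z hz)
  have hconst : (δ + μ).coeff 0 ≠ 0 := by
    simpa only [← coeff_zero_eq_aeval_zero', Ne, map_eq_zero] using hdisk 0 (by simp)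
  have hcircle (z : ℂ) (hz : ‖z‖ = 1) :
      0 ≤ (aeval z (reflect p δ) * conj (aeval z (reflect p μ))).re := by
    rw [aeval_reflect_mul_conj_aeval_reflect hδ hμ hz]
    exact hclosed z⁻¹ (by simp [hz])
  have hroots (z : ℂ) (hz : aeval z (reflect p δ + reflect p μ) = 0) : ‖z‖ < 1 :=
    norm_lt_one_of_aeval_reflect_eq_zero hadd hdisk (by rwa [reflect_add])
  obtain ⟨G, hG, hstorage⟩ := exists_posDef_storage_sub_le
    (natDegree_reflect_le_of_natDegree_le hδ) (natDegree_reflect_le_of_natDegree_le hμ)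
    (reflect_add δ μ p ▸ natDegree_reflect_eq hadd hconst) (isCoprime_reflect hδ hμ hlead hcop)
    hcircle hroots
  refine ⟨G, hG, fun E _ _ B hB w => ?_⟩
  rw [sum_coeff_smul_eq_aeval_seqShift hδ, sum_coeff_smul_eq_aeval_seqShift hμ]
  exact hstorage E B hB w 0

/-- **Dahlquist's G-stability lemma.**
Let `δ`, `μ` be real polynomials of degree at most `p` (at least one of degree exactly `p`)
with no common divisor (i.e. coprime), such that `μ(ζ) ≠ 0` and `Re (δ(ζ)/μ(ζ)) > 0` for all
complex `ζ` with `|ζ| < 1`.  Then there is a symmetric positive definite matrix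
`G = (g i j) ∈ ℝ^{p×p}` such that for every `N ≥ 1`, every inner product on `ℝ^N`
(given by a symmetric positive definite matrix `M`, `⟨v, w⟩ = vᵀ M w`), and all vectors
`w 0, …, w p ∈ ℝ^N`,
`⟨∑ i, δ_i w_{p-i}, ∑ i, μ_i w_{p-i}⟩ ≥ ∑ i j, g i j ⟨w i, w j⟩ - ∑ i j, g i j ⟨w (i-1), w (j-1)⟩`. -/
theorem dahlquist_G_stability
    (p : ℕ) (hp : 1 ≤ p) (δ μ : Polynomial ℝ)
    (hδdeg : δ.degree ≤ (p : ℕ)) (hμdeg : μ.degree ≤ (p : ℕ))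
    (hdeg : δ.degree = (p : ℕ) ∨ μ.degree = (p : ℕ))
    (hcop : IsCoprime δ μ)
    (hpos : ∀ z : ℂ, ‖z‖ < 1 →
      Polynomial.aeval z μ ≠ 0 ∧ 0 < (Polynomial.aeval z δ / Polynomial.aeval z μ).re) :
    ∃ G : Matrix (Fin p) (Fin p) ℝ, G.IsSymm ∧ G.PosDef ∧
      ∀ (N : ℕ), 1 ≤ N → ∀ (M : Matrix (Fin N) (Fin N) ℝ), M.IsSymm → M.PosDef →
        ∀ w : ℕ → (Fin N → ℝ),
          (∑ i ∈ Finset.range (p + 1), δ.coeff i • w (p - i)) ⬝ᵥ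
              M.mulVec (∑ i ∈ Finset.range (p + 1), μ.coeff i • w (p - i)) ≥
            (∑ i : Fin p, ∑ j : Fin p, G i j *
                (w ((i : ℕ) + 1) ⬝ᵥ M.mulVec (w ((j : ℕ) + 1)))) -
            (∑ i : Fin p, ∑ j : Fin p, G i j *
                (w (i : ℕ) ⬝ᵥ M.mulVec (w (j : ℕ)))) := by
  obtain ⟨G, hG, hstorage⟩ := dahlquist_G_stability_general p δ μ hδdeg hμdeg hdeg hcop
    fun z hz => re_mul_conj_nonneg_of_re_div_nonneg (hpos z hz).2.le
  refine ⟨G, G.conjTranspose_eq_transpose_of_trivial.symm.trans hG.isHermitian, hG,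
    fun N _ M _ hM w => ?_⟩
  simpa only [toBilin'_apply'] using hstorage _ M.toBilin' (isPosSemidef_toBilin' hM.posSemidef) w
end

section
/- For every integer p with 1 ≤ p ≤ 5 there exists a real number η with 0 ≤ η < 1 such that Re(δ(ζ)/(1 − ηζ)) > 0 for every complex ζ with |ζ| < 1, where δ(ζ) = Σ_{ℓ=1}^p (1/ℓ)(1−ζ)^ℓ. -/
/-!
Since `η < 1`, the quotient `f(ζ) = δ(ζ)/(1 - ηζ)` is holomorphic near the closed unit disc, and
the minimum principle for `Re f` reduces the claim to `Re f(0) > 0` and `Re f ≥ 0` on the unit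
circle, that is, to `Re (δ(ζ) conj (1 - ηζ)) ≥ 0` there. For `|ζ| = 1` the number `w = 1 - ζ`
satisfies `|w|² = 2 Re w`, so `Re (w ^ n)` is a polynomial in `u = Re w` given by a two-term
recurrence, and so is the quantity to be bounded. The single choice `η = 9/10` makes it
nonnegative for all `p ≤ 5` and `u ≥ 0`.
-/

open Complex ComplexConjugate

section MinimumPrinciple

variable {E : Type*} [NormedAddCommGroup E] [NormedSpace ℂ E] {U : Set E} {f : E → ℂ}

-- Since `‖exp (-f)‖ = exp (-Re f)`, the maximum modulus principle for `exp (-f)` is a minimum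
-- principle for `Re f`.
lemma re_nonneg_of_forall_mem_frontier_re_nonneg [Nontrivial E] (hU : Bornology.IsBounded U)
    (hf : DiffContOnCl ℂ f U) (hfrontier : ∀ z ∈ frontier U, 0 ≤ (f z).re) {z : E}
    (hz : z ∈ closure U) : 0 ≤ (f z).re := by
  have norm_exp_le_one (w : E) : ‖exp (-f w)‖ ≤ 1 ↔ 0 ≤ (f w).re := by
    rw [norm_exp, Real.exp_le_one_iff, neg_re, neg_nonpos]
  have hexp : DiffContOnCl ℂ (fun w ↦ exp (-f w)) U := differentiable_exp.comp_diffContOnCl hf.neg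
  exact (norm_exp_le_one z).1 <| norm_le_of_forall_mem_frontier_norm_le hU hexp
    (fun w hw ↦ (norm_exp_le_one w).2 (hfrontier w hw)) hz

lemma re_pos_of_isPreconnected_of_re_nonneg (hconn : IsPreconnected U) (hopen : IsOpen U)
    (hf : DifferentiableOn ℂ f U) (hnonneg : ∀ z ∈ U, 0 ≤ (f z).re) {c : E} (hc : c ∈ U)
    (hcpos : 0 < (f c).re) {z : E} (hz : z ∈ U) : 0 < (f z).re := by
  refine (hnonneg z hz).lt_of_ne' fun hzero ↦ hcpos.ne' ?_
  have hmax : IsMaxOn (norm ∘ fun w ↦ exp (-f w)) U z := fun w hw ↦ by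
    simpa [norm_exp, hzero] using hnonneg w hw
  simpa [norm_exp, hzero] using
    norm_eqOn_of_isPreconnected_of_isMaxOn hconn hopen hf.neg.cexp hz hmax hc

lemma re_div_nonneg_of_re_mul_conj_nonneg {a b : ℂ} (h : 0 ≤ (a * conj b).re) :
    0 ≤ (a / b).re := by
  rw [div_eq_mul_inv, inv_def, ← mul_assoc, re_mul_ofReal]
  exact mul_nonneg h (inv_nonneg.2 (normSq_nonneg b))

lemma re_div_pos_of_forall_mem_frontier_re_mul_conj_nonneg [Nontrivial E]
    (hbdd : Bornology.IsBounded U) (hconn : IsPreconnected U) (hopen : IsOpen U) {a b : E → ℂ}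
    (ha : DiffContOnCl ℂ a U) (hb : DiffContOnCl ℂ b U) (hb_ne : ∀ z ∈ closure U, b z ≠ 0)
    (hfrontier : ∀ z ∈ frontier U, 0 ≤ (a z * conj (b z)).re) {c : E} (hc : c ∈ U)
    (hcpos : 0 < (a c / b c).re) {z : E} (hz : z ∈ U) : 0 < (a z / b z).re := by
  have hdiv : DiffContOnCl ℂ (fun w ↦ a w / b w) U := by
    simp only [div_eq_mul_inv]
    exact ha.smul (hb.inv hb_ne)
  have hnonneg (w : E) (hw : w ∈ U) : 0 ≤ (a w / b w).re :=
    re_nonneg_of_forall_mem_frontier_re_nonneg hbdd hdiv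
      (fun v hv ↦ re_div_nonneg_of_re_mul_conj_nonneg (hfrontier v hv)) (subset_closure hw)
  exact re_pos_of_isPreconnected_of_re_nonneg hconn hopen hdiv.differentiableOn hnonneg hc hcpos hz

end MinimumPrinciple

section ComplexPowers

lemma re_pow_add_two (w : ℂ) (n : ℕ) :
    (w ^ (n + 2)).re = 2 * w.re * (w ^ (n + 1)).re - normSq w * (w ^ n).re := by
  simp only [pow_succ, mul_re, mul_im, normSq_apply]
  ring

lemma re_pow_succ_mul_conj (w : ℂ) (n : ℕ) :
    (w ^ (n + 1) * conj w).re = normSq w * (w ^ n).re := by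
  rw [pow_succ, mul_assoc, mul_conj, re_mul_ofReal, mul_comm]

lemma normSq_one_sub_of_norm_eq_one {z : ℂ} (hz : ‖z‖ = 1) :
    normSq (1 - z) = 2 * (1 - z).re := by
  rw [normSq_sub, normSq_eq_norm_sq z, hz, map_one, one_mul, conj_re, sub_re, one_re]
  ring

end ComplexPowers

/-- The polynomials in `u = 1 - Re ζ` that represent `Re ((1 - ζ) ^ n)` on the unit circle. -/
def circlePowRe (u : ℝ) : ℕ → ℝ
  | 0 => 1
  | 1 => u
  | n + 2 => 2 * u * (circlePowRe u (n + 1) - circlePowRe u n)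

lemma re_one_sub_pow_of_norm_eq_one {z : ℂ} (hz : ‖z‖ = 1) (n : ℕ) :
    ((1 - z) ^ n).re = circlePowRe (1 - z).re n := by
  induction n using Nat.twoStepInduction with
  | zero => simp [circlePowRe]
  | one => simp [circlePowRe]
  | more n ih ih_succ =>
    rw [re_pow_add_two, normSq_one_sub_of_norm_eq_one hz, ih, ih_succ, circlePowRe]
    ring

/-- The generating polynomial `δ` of the `p`-step BDF method, as a function on `ℂ`. -/
noncomputable def bdfGenerating (p : ℕ) (z : ℂ) : ℂ :=
  ∑ ℓ ∈ Finset.Icc 1 p, (ℓ : ℂ)⁻¹ * (1 - z) ^ ℓ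

/-- The polynomial in `u = 1 - Re ζ` that represents `Re (δ(ζ) conj (1 - ηζ))` on the unit circle,
where `δ` is the generating polynomial of the `p`-step BDF method. The index `n` stands
for `ℓ - 1`. -/
noncomputable def bdfCircleRe (p : ℕ) (η u : ℝ) : ℝ :=
  ∑ n ∈ Finset.range p, ((n + 1 : ℕ) : ℝ)⁻¹ *
    ((1 - η) * circlePowRe u (n + 1) + 2 * η * u * circlePowRe u n)

lemma differentiable_bdfGenerating (p : ℕ) : Differentiable ℂ (bdfGenerating p) := by
  unfold bdfGenerating
  fun_prop

lemma bdfGenerating_eq_sum_range (p : ℕ) (z : ℂ) :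
    bdfGenerating p z = ∑ n ∈ Finset.range p, ((n + 1 : ℕ) : ℂ)⁻¹ * (1 - z) ^ (n + 1) := by
  rw [Finset.range_eq_Ico, Finset.sum_Ico_add' (fun ℓ : ℕ ↦ (ℓ : ℂ)⁻¹ * (1 - z) ^ ℓ), zero_add,
    Finset.Ico_add_one_right_eq_Icc, bdfGenerating]

lemma re_bdfGenerating_zero_pos {p : ℕ} (hp : 1 ≤ p) : 0 < (bdfGenerating p 0).re := by
  rw [bdfGenerating, re_sum]
  refine Finset.sum_pos (fun ℓ hℓ ↦ ?_) (Finset.nonempty_Icc.2 hp)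
  have hℓ_pos : (0 : ℝ) < ℓ := Nat.cast_pos.2 (Finset.mem_Icc.1 hℓ).1
  simpa [← ofReal_natCast, ← ofReal_inv] using hℓ_pos

lemma re_one_sub_pow_succ_mul_conj {z : ℂ} (hz : ‖z‖ = 1) (η : ℝ) (n : ℕ) :
    ((1 - z) ^ (n + 1) * conj (1 - η * z)).re =
      (1 - η) * circlePowRe (1 - z).re (n + 1) +
        2 * η * (1 - z).re * circlePowRe (1 - z).re n := by
  have hconj : conj (1 - η * z) = ((1 - η : ℝ) : ℂ) + η * conj (1 - z) := by
    simp only [map_sub, map_one, map_mul, conj_ofReal, ofReal_sub, ofReal_one]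
    ring
  rw [hconj, mul_add, mul_left_comm, add_re, re_mul_ofReal, re_ofReal_mul, re_pow_succ_mul_conj,
    normSq_one_sub_of_norm_eq_one hz, re_one_sub_pow_of_norm_eq_one hz,
    re_one_sub_pow_of_norm_eq_one hz]
  ring

lemma re_bdfGenerating_mul_conj {z : ℂ} (hz : ‖z‖ = 1) (p : ℕ) (η : ℝ) :
    (bdfGenerating p z * conj (1 - η * z)).re = bdfCircleRe p η (1 - z).re := by
  rw [bdfGenerating_eq_sum_range, bdfCircleRe, Finset.sum_mul, re_sum]
  refine Finset.sum_congr rfl fun n _ ↦ ?_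
  rw [mul_assoc, ← ofReal_natCast, ← ofReal_inv, re_ofReal_mul, re_one_sub_pow_succ_mul_conj hz]

lemma bdfCircleRe_nonneg {p : ℕ} (hp : p ≤ 5) {u : ℝ} (hu : 0 ≤ u) :
    0 ≤ bdfCircleRe p (9 / 10) u := by
  obtain ⟨q, hq, hfactor⟩ : ∃ q : ℝ, 0 ≤ q ∧ bdfCircleRe p (9 / 10) u = u * q := by
    interval_cases p <;>
      simp only [bdfCircleRe, Finset.sum_range_succ, Finset.sum_range_zero, circlePowRe]
    · exact ⟨0, le_rfl, by ring⟩
    · exact ⟨19 / 10, by norm_num, by push_cast; ring⟩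
    · exact ⟨9 / 5 + u, by positivity, by push_cast; ring⟩
    · exact ⟨9 / 5 - 2 / 5 * u + 4 / 3 * u ^ 2, by nlinarith only [sq_nonneg (u - 1 / 2)],
        by push_cast; ring⟩
    · exact ⟨9 / 5 - 3 / 10 * u - 53 / 30 * u ^ 2 + 2 * u ^ 3,
        by nlinarith only [mul_nonneg hu (sq_nonneg (u - 1 / 2)), sq_nonneg (u - 12 / 7)],
        by push_cast; ring⟩
    · exact ⟨9 / 5 - 3 / 10 * u + 11 / 150 * u ^ 2 - 114 / 25 * u ^ 3 + 16 / 5 * u ^ 4,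
        by nlinarith only [sq_nonneg (u ^ 2 - 57 / 80 * u - 2 / 5), sq_nonneg (u - 21 / 20)],
        by push_cast; ring⟩
  rw [hfactor]
  exact mul_nonneg hu hq

/-- **Nevanlinna–Odeh multiplier lemma.**
For every `1 ≤ p ≤ 5` there is `η ∈ [0,1)` such that `Re (δ(ζ)/(1 - ηζ)) > 0` for all
complex `ζ` with `|ζ| < 1`, where `δ(ζ) = ∑_{ℓ=1}^p (1/ℓ)(1-ζ)^ℓ` is the `p`-step BDF
generating polynomial. -/
theorem nevanlinna_odeh (p : ℕ) (hp1 : 1 ≤ p) (hp5 : p ≤ 5) :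
    ∃ η : ℝ, 0 ≤ η ∧ η < 1 ∧ ∀ z : ℂ, ‖z‖ < 1 →
      0 < ((∑ ℓ ∈ Finset.Icc 1 p, (ℓ : ℂ)⁻¹ * (1 - z) ^ ℓ) / (1 - (η : ℂ) * z)).re := by
  refine ⟨9 / 10, by norm_num, by norm_num, fun z hz ↦ ?_⟩
  change 0 < (bdfGenerating p z / _).re
  refine re_div_pos_of_forall_mem_frontier_re_mul_conj_nonneg (c := 0)
    (b := fun w ↦ 1 - ((9 / 10 : ℝ) : ℂ) * w) Metric.isBounded_ball
    (convex_ball 0 1).isPreconnected Metric.isOpen_ball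
    (differentiable_bdfGenerating p).diffContOnCl (Differentiable.diffContOnCl (by fun_prop))
    (fun w hw ↦ ?_) (fun w hw ↦ ?_) (Metric.mem_ball_self one_pos)
    (by simpa using re_bdfGenerating_zero_pos hp1) (mem_ball_zero_iff.2 hz)
  · rw [closure_ball _ one_ne_zero, mem_closedBall_zero_iff] at hw
    have hnorm : ‖((9 / 10 : ℝ) : ℂ) * w‖ < 1 := by
      rw [norm_mul, norm_real, Real.norm_of_nonneg (by norm_num)]
      linarith
    exact (isUnit_one_sub_of_norm_lt_one hnorm).ne_zero
  · rw [frontier_ball _ one_ne_zero, mem_sphere_zero_iff_norm] at hw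
    have hu : 0 ≤ (1 - w).re := by simpa [hw] using re_le_norm w
    rw [re_bdfGenerating_mul_conj hw]
    exact bdfCircleRe_nonneg hp5 hu
end

section
/- Let 1 ≤ p ≤ 6, let δ_0, …, δ_p be the p-step BDF coefficients, and let T > 0. Then there exists a constant C, depending only on p and T, with the following property: for every real normed vector space E, every step size τ > 0 and every integer N with Nτ ≤ T, if vectors a_0, …, a_N ∈ E and b_p, …, b_N ∈ E satisfy (1/τ) Σ_{j=0}^p δ_j a_{n−j} = b_n for all p ≤ n ≤ N, then ‖a_n‖² ≤ C τ Σ_{j=p}^n ‖b_j‖² + C Σ_{i=0}^{p−1} ‖a_i‖² for all p ≤ n ≤ N. -/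
/-- The generating polynomial `δ(ζ) = ∑_{ℓ=1}^p (1/ℓ)(1-ζ)^ℓ` of the `p`-step BDF method;
the BDF coefficients `δ_j` are its coefficients. -/
noncomputable def bdfPoly (p : ℕ) : Polynomial ℝ :=
  ∑ ℓ ∈ Finset.Icc 1 p, Polynomial.C ((ℓ : ℝ)⁻¹) * (1 - Polynomial.X) ^ ℓ

/-!
The equation `u = δ * a` between formal power series is solved by `a = (1 / δ) * u`, so if the
coefficients of `1 / δ` are bounded by `M`, then `‖a n‖ ≤ M ∑_{k ≤ n} ‖u k‖`. Here `u k = τ b k`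
for `k ≥ p`, while the `u k` with `k < p` are combinations of the starting values;
Cauchy–Schwarz and `n τ ≤ T` turn this into the squared estimate.

To bound the coefficients of `1 / δ`, multiply `δ` by a polynomial `Q` such that
`Q δ = (1 - ζ) W` and the constant coefficient of `W` dominates the sum of the absolute values of
the others. Then `1 / W` is absolutely summable, hence so is `Q / W`, and the coefficients of
`1 / δ = (Q / W) / (1 - ζ)` are the partial sums of those of `Q / W`.
-/

open Finset
open scoped Polynomial PowerSeries

section AbsolutelySummable

open PowerSeries

lemma sum_norm_coeff_mul_le {R : Type*} [SeminormedRing R] (f g : R⟦X⟧) (m : ℕ) :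
    ∑ n ∈ range m, ‖coeff n (f * g)‖ ≤
      (∑ n ∈ range m, ‖coeff n f‖) * ∑ n ∈ range m, ‖coeff n g‖ := by
  calc ∑ n ∈ range m, ‖coeff n (f * g)‖
      ≤ ∑ n ∈ range m, ∑ i ∈ range (n + 1), ‖coeff i f‖ * ‖coeff (n - i) g‖ := by
        refine sum_le_sum fun n _ => ?_
        rw [coeff_mul, Nat.sum_antidiagonal_eq_sum_range_succ_mk]
        exact norm_sum_le_of_le _ fun i _ => norm_mul_le _ _
    _ = ∑ i ∈ range m, ∑ j ∈ range (m - i), ‖coeff i f‖ * ‖coeff j g‖ :=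
        sum_range_diag_flip m fun i j => ‖coeff i f‖ * ‖coeff j g‖
    _ ≤ ∑ i ∈ range m, ∑ j ∈ range m, ‖coeff i f‖ * ‖coeff j g‖ := by
        gcongr
        exact Nat.sub_le _ _
    _ = (∑ n ∈ range m, ‖coeff n f‖) * ∑ n ∈ range m, ‖coeff n g‖ := (sum_mul_sum _ _ _ _).symm

lemma sum_norm_coeff_X_mul_le {R : Type*} [SeminormedRing R] (f : R⟦X⟧) (m : ℕ) :
    ∑ n ∈ range m, ‖coeff n (X * f)‖ ≤ ∑ n ∈ range m, ‖coeff n f‖ := by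
  cases m with
  | zero => simp
  | succ m =>
    rw [sum_range_succ', sum_range_succ]
    simp [coeff_succ_X_mul]

lemma sum_norm_coeff_one_le {R : Type*} [SeminormedRing R] [NormOneClass R] (m : ℕ) :
    ∑ n ∈ range m, ‖coeff n (1 : R⟦X⟧)‖ ≤ 1 := by
  cases m with
  | zero => simp
  | succ m => simp [sum_range_succ', coeff_one]

lemma summable_norm_coeff_mul {R : Type*} [NormedRing R] {f g : R⟦X⟧}
    (hf : Summable fun n => ‖coeff n f‖) (hg : Summable fun n => ‖coeff n g‖) :
    Summable fun n => ‖coeff n (f * g)‖ := by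
  simpa only [coeff_mul] using summable_norm_sum_mul_antidiagonal_of_summable_norm hf hg

lemma norm_coeff_mul_mk_one_le {R : Type*} [SeminormedRing R] {f : R⟦X⟧}
    (hf : Summable fun n => ‖coeff n f‖) (n : ℕ) :
    ‖coeff n (f * PowerSeries.mk 1)‖ ≤ ∑' k, ‖coeff k f‖ := by
  rw [coeff_mul, Nat.sum_antidiagonal_eq_sum_range_succ_mk]
  simp only [coeff_mk, Pi.one_apply, mul_one]
  exact (norm_sum_le _ _).trans (hf.sum_le_tsum _ fun _ _ => norm_nonneg _)

lemma summable_norm_coeff_coe {R : Type*} [SeminormedRing R] (P : R[X]) :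
    Summable fun n => ‖coeff n (P : R⟦X⟧)‖ :=
  summable_of_ne_finset_zero (s := P.support) fun n hn => by
    simp [Polynomial.notMem_support_iff.mp hn]

variable {𝕜 : Type*} [NormedField 𝕜]

lemma summable_norm_coeff_inv {W : 𝕜⟦X⟧} (hW : Summable fun n => ‖coeff n W‖)
    (hdom : ∑' n, ‖coeff (n + 1) W‖ < ‖constantCoeff W‖) :
    Summable fun n => ‖coeff n W⁻¹‖ := by
  set w := constantCoeff W
  set c := ∑' n, ‖coeff (n + 1) W‖
  set V : 𝕜⟦X⟧ := mk fun n => coeff (n + 1) W with hV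
  have hw : w ≠ 0 := norm_pos_iff.mp ((tsum_nonneg fun _ => norm_nonneg _).trans_lt hdom)
  have hVc (m : ℕ) : ∑ n ∈ range m, ‖coeff n V‖ ≤ c := by
    simp only [hV, coeff_mk]
    exact ((summable_nat_add_iff 1).mpr hW).sum_le_tsum _ fun _ _ => norm_nonneg _
  have hinv : C w * W⁻¹ = 1 - X * (V * W⁻¹) := by
    rw [eq_sub_iff_add_eq', ← mul_assoc, ← add_mul, ← eq_X_mul_shift_add_const,
      PowerSeries.mul_inv_cancel W hw]
  refine summable_of_sum_range_le (c := (‖w‖ - c)⁻¹) (fun _ => norm_nonneg _) fun m => ?_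
  set S := ∑ n ∈ range m, ‖coeff n W⁻¹‖ with hS
  have hbound : ‖w‖ * S ≤ 1 + c * S := by
    calc ‖w‖ * S
        = ∑ n ∈ range m, ‖coeff n (1 - X * (V * W⁻¹))‖ := by simp [← hinv, hS, mul_sum]
      _ ≤ ∑ n ∈ range m, ‖coeff n (1 : 𝕜⟦X⟧)‖ + ∑ n ∈ range m, ‖coeff n (X * (V * W⁻¹))‖ := by
          simp only [map_sub, ← sum_add_distrib]
          gcongr
          exact norm_sub_le _ _
      _ ≤ 1 + (∑ n ∈ range m, ‖coeff n V‖) * S :=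
          add_le_add (sum_norm_coeff_one_le m)
            ((sum_norm_coeff_X_mul_le _ m).trans (sum_norm_coeff_mul_le _ _ m))
      _ ≤ 1 + c * S := by
          gcongr
          exact hVc m
  rw [← one_div, le_div_iff₀ (sub_pos.mpr hdom)]
  linarith

lemma inv_eq_mul_inv_mul_mk_one {P Q W : 𝕜⟦X⟧} (hP : constantCoeff P ≠ 0)
    (hW : constantCoeff W ≠ 0) (h : Q * P = (1 - X) * W) : P⁻¹ = Q * W⁻¹ * PowerSeries.mk 1 := by
  rw [eq_comm, PowerSeries.eq_inv_iff_mul_eq_one hP]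
  calc Q * W⁻¹ * PowerSeries.mk 1 * P = Q * P * W⁻¹ * PowerSeries.mk 1 := by ring
    _ = PowerSeries.mk 1 * (1 - X) * (W * W⁻¹) := by rw [h]; ring
    _ = 1 := by rw [mk_one_mul_one_sub_eq_one, PowerSeries.mul_inv_cancel W hW, one_mul]

end AbsolutelySummable

section ZeroStability

open Polynomial

variable {𝕜 : Type*} [NormedField 𝕜]

/-- Zero-stability of the linear difference equation `∑ j, P.coeff j • a (n - j) = u n`: the
power series `1 / P` has bounded coefficients. The condition on `P.coeff 0` excludes the junk value
`P⁻¹ = 0`. -/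
def IsZeroStable (P : 𝕜[X]) : Prop :=
  P.coeff 0 ≠ 0 ∧ ∃ M, ∀ n, ‖PowerSeries.coeff n (P : 𝕜⟦X⟧)⁻¹‖ ≤ M

lemma summable_norm_coeff_inv_coe {W : 𝕜[X]} {m : ℕ} (hdeg : W.natDegree ≤ m)
    (hdom : ∑ n ∈ range m, ‖W.coeff (n + 1)‖ < ‖W.coeff 0‖) :
    Summable fun n => ‖PowerSeries.coeff n (W : 𝕜⟦X⟧)⁻¹‖ := by
  refine summable_norm_coeff_inv (summable_norm_coeff_coe W) ?_
  rw [tsum_eq_sum (s := range m)]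
  · simpa using hdom
  · intro n hn
    rw [mem_range] at hn
    rw [coeff_coe, coeff_eq_zero_of_natDegree_lt (by lia), norm_zero]

lemma isZeroStable_of_mul_eq_one_sub_X_mul {P Q W : 𝕜[X]} {m : ℕ} (hdeg : W.natDegree ≤ m)
    (hdom : ∑ n ∈ range m, ‖W.coeff (n + 1)‖ < ‖W.coeff 0‖) (h : Q * P = (1 - X) * W) :
    IsZeroStable P := by
  have hW₀ : W.coeff 0 ≠ 0 :=
    norm_pos_iff.mp ((sum_nonneg fun _ _ => norm_nonneg _).trans_lt hdom)
  have hP₀ : P.coeff 0 ≠ 0 := by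
    refine right_ne_zero_of_mul (a := Q.coeff 0) ?_
    rw [← mul_coeff_zero, h]
    simpa [mul_coeff_zero] using hW₀
  have h' : (Q : 𝕜⟦X⟧) * (P : 𝕜⟦X⟧) = (1 - PowerSeries.X) * (W : 𝕜⟦X⟧) := by
    simpa using congrArg Polynomial.toPowerSeries h
  have hinv := inv_eq_mul_inv_mul_mk_one (by simpa using hP₀) (by simpa using hW₀) h'
  have hQW := summable_norm_coeff_mul (summable_norm_coeff_coe Q)
    (summable_norm_coeff_inv_coe hdeg hdom)
  exact ⟨hP₀, _, fun n => hinv ▸ norm_coeff_mul_mk_one_le hQW n⟩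

lemma exists_mul_bdfPoly_eq_one_sub_X_mul {p : ℕ} (hp1 : 1 ≤ p) (hp6 : p ≤ 6) :
    ∃ (m : ℕ) (Q W : ℝ[X]), W.natDegree ≤ m ∧
      ∑ n ∈ range m, ‖W.coeff (n + 1)‖ < ‖W.coeff 0‖ ∧ Q * bdfPoly p = (1 - X) * W := by
  -- The power series `Q = (1 - X) / bdfPoly p` would give `W = 1`; a multiple of a crude polynomial
  -- approximation to it suffices.
  interval_cases p
  on_goal 1 => use 0, 1, 1
  on_goal 2 => use 1, 2, 3 - X
  on_goal 3 => use 2, 6, 11 - 7 * X + 2 * X ^ 2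
  on_goal 4 => use 4, 12 * (2 + X), 50 - 21 * X + 3 * X ^ 2 + 7 * X ^ 3 - 3 * X ^ 4
  on_goal 5 => use 6, 60 * (2 + 2 * X + X ^ 2),
    274 - 52 * X + 85 * X ^ 2 - 15 * X ^ 3 + 35 * X ^ 4 - 39 * X ^ 5 + 12 * X ^ 6
  on_goal 6 => use 8, 60 * (4 + 6 * X + 4 * X ^ 2 + X ^ 3),
    588 + 30 * X + 258 * X ^ 2 + 65 * X ^ 3 + 5 * X ^ 4 - 83 * X ^ 5 + 25 * X ^ 6 + 22 * X ^ 7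
      - 10 * X ^ 8
  all_goals
    refine ⟨by compute_degree, ?_, Polynomial.funext fun x => ?_⟩
    · norm_num [sum_range_succ, coeff_X, coeff_one, coeff_X_pow]
    · simp only [bdfPoly, sum_Icc_succ_top, Nat.reduceLeDiff, Icc_self, sum_singleton, eval_mul,
        eval_add, eval_sub, eval_pow, eval_C, eval_X, eval_one, eval_ofNat]
      field_simp
      ring

lemma isZeroStable_bdfPoly {p : ℕ} (hp1 : 1 ≤ p) (hp6 : p ≤ 6) : IsZeroStable (bdfPoly p) := by
  obtain ⟨m, Q, W, hdeg, hdom, h⟩ := exists_mul_bdfPoly_eq_one_sub_X_mul hp1 hp6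
  exact isZeroStable_of_mul_eq_one_sub_X_mul hdeg hdom h

lemma natDegree_bdfPoly_le (p : ℕ) : (bdfPoly p).natDegree ≤ p := by
  refine natDegree_sum_le_of_forall_le _ _ fun ℓ hℓ => (natDegree_C_mul_le _ _).trans ?_
  have h : (1 - X : ℝ[X]).natDegree ≤ 1 := by compute_degree
  calc ((1 - X : ℝ[X]) ^ ℓ).natDegree ≤ ℓ * 1 := natDegree_pow_le_of_le ℓ h
    _ ≤ p := by simpa using (mem_Icc.mp hℓ).2

end ZeroStability

section CauchyProduct

open PowerSeries

variable {R E : Type*}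

section Module

variable [Semiring R] [AddCommMonoid E] [Module R E]

/-- The Cauchy product of a power series with a sequence of vectors, that is, multiplication of the
generating series of the sequence by `f`. -/
noncomputable def cauchySMul (f : R⟦X⟧) (a : ℕ → E) (n : ℕ) : E :=
  ∑ k ∈ range (n + 1), coeff k f • a (n - k)

lemma cauchySMul_eq_sum_antidiagonal (f : R⟦X⟧) (a : ℕ → E) (n : ℕ) :
    cauchySMul f a n = ∑ ij ∈ antidiagonal n, coeff ij.1 f • a ij.2 :=
  (Nat.sum_antidiagonal_eq_sum_range_succ (fun i j => coeff i f • a j) n).symm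

lemma one_cauchySMul (a : ℕ → E) : cauchySMul (1 : R⟦X⟧) a = a := by
  funext n
  simp [cauchySMul, coeff_one]

lemma mul_cauchySMul (f g : R⟦X⟧) (a : ℕ → E) :
    cauchySMul (f * g) a = cauchySMul f (cauchySMul g a) := by
  funext n
  simp only [cauchySMul_eq_sum_antidiagonal, coeff_mul, sum_smul, smul_sum, sum_sigma', mul_smul]
  refine sum_nbij' (fun ⟨⟨_, j⟩, ⟨k, l⟩⟩ => ⟨(k, l + j), (l, j)⟩)
    (fun ⟨⟨i, _⟩, ⟨k, l⟩⟩ => ⟨(i + k, l), (i, k)⟩) ?_ ?_ ?_ ?_ ?_ <;>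
    grind [HasAntidiagonal.mem_antidiagonal]

lemma cauchySMul_coe_apply {P : R[X]} {p n : ℕ} (hdeg : P.natDegree ≤ p) (hpn : p ≤ n)
    (a : ℕ → E) :
    cauchySMul (P : R⟦X⟧) a n = ∑ j ∈ range (p + 1), P.coeff j • a (n - j) := by
  simp only [cauchySMul, Polynomial.coeff_coe]
  refine (sum_subset (range_mono (by lia)) fun j _ hj => ?_).symm
  rw [mem_range] at hj
  rw [Polynomial.coeff_eq_zero_of_natDegree_lt (by lia), zero_smul]

end Module

section Norm

variable [SeminormedRing R] [SeminormedAddCommGroup E] [Module R E] [IsBoundedSMul R E]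
  {f : R⟦X⟧} {M : ℝ}

lemma norm_cauchySMul_le (hM : ∀ n, ‖coeff n f‖ ≤ M) (a : ℕ → E) (n : ℕ) :
    ‖cauchySMul f a n‖ ≤ M * ∑ k ∈ range (n + 1), ‖a k‖ := by
  calc ‖cauchySMul f a n‖ ≤ ∑ k ∈ range (n + 1), M * ‖a (n - k)‖ :=
        norm_sum_le_of_le _ fun k _ => (norm_smul_le _ _).trans (by gcongr; exact hM k)
    _ = M * ∑ k ∈ range (n + 1), ‖a k‖ := by
        rw [← mul_sum, ← sum_range_reflect (fun k => ‖a k‖)]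
        simp

lemma sum_norm_cauchySMul_le (hM : ∀ n, ‖coeff n f‖ ≤ M) (a : ℕ → E) (m : ℕ) :
    ∑ k ∈ range m, ‖cauchySMul f a k‖ ≤ m * (M * ∑ k ∈ range m, ‖a k‖) := by
  have hM₀ : 0 ≤ M := (norm_nonneg _).trans (hM 0)
  have h (k : ℕ) (hk : k ∈ range m) : ‖cauchySMul f a k‖ ≤ M * ∑ i ∈ range m, ‖a i‖ := by
    refine (norm_cauchySMul_le hM a k).trans ?_
    gcongr
    exact mem_range.mp hk
  simpa using sum_le_sum h

end Norm

end CauchyProduct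

lemma IsZeroStable.exists_norm_le {𝕜 : Type*} [NormedField 𝕜] {P : 𝕜[X]} (hP : IsZeroStable P)
    {p : ℕ} (hdeg : P.natDegree ≤ p) :
    ∃ K : ℝ, ∀ (E : Type*) [SeminormedAddCommGroup E] [NormedSpace 𝕜 E] (a : ℕ → E) (n : ℕ),
      p ≤ n → ‖a n‖ ≤ K * (∑ i ∈ range p, ‖a i‖ +
        ∑ k ∈ Icc p n, ‖∑ j ∈ range (p + 1), P.coeff j • a (k - j)‖) := by
  obtain ⟨hP₀, M, hM⟩ := hP
  have hM₀ : 0 ≤ M := (norm_nonneg _).trans (hM 0)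
  set L := P.supNorm
  have hL₀ : 0 ≤ L := P.supNorm_nonneg
  refine ⟨M * (p * L + 1), fun E _ _ a n hpn => ?_⟩
  set u := cauchySMul (P : 𝕜⟦X⟧) a with hu
  set A := ∑ i ∈ range p, ‖a i‖
  set B := ∑ k ∈ Icc p n, ‖∑ j ∈ range (p + 1), P.coeff j • a (k - j)‖
  have ha : a = cauchySMul (P : 𝕜⟦X⟧)⁻¹ u := by
    rw [hu, ← mul_cauchySMul, PowerSeries.inv_mul_cancel _ (by simpa using hP₀), one_cauchySMul]
  have hstart : ∑ k ∈ range p, ‖u k‖ ≤ p * (L * A) :=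
    sum_norm_cauchySMul_le (fun i => by simpa using P.le_supNorm i) a p
  have hrest : ∑ k ∈ Icc p n, ‖u k‖ = B :=
    sum_congr rfl fun k hk => by rw [hu, cauchySMul_coe_apply hdeg (mem_Icc.mp hk).1]
  calc ‖a n‖ = ‖cauchySMul (P : 𝕜⟦X⟧)⁻¹ u n‖ := congrArg (‖· n‖) ha
    _ ≤ M * ∑ k ∈ range (n + 1), ‖u k‖ := norm_cauchySMul_le hM u n
    _ = M * (∑ k ∈ range p, ‖u k‖ + ∑ k ∈ Icc p n, ‖u k‖) := by
        rw [← sum_range_add_sum_Ico _ (show p ≤ n + 1 by lia), Ico_add_one_right_eq_Icc]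
    _ ≤ M * (p * (L * A) + B) := by rw [hrest]; gcongr
    _ ≤ M * (p * (L * A) + B + (A + p * L * B)) :=
        mul_le_mul_of_nonneg_left (le_add_of_nonneg_right (by positivity)) hM₀
    _ = M * (p * L + 1) * (A + B) := by ring

lemma mul_sq_sum_le_of_card_mul_le {ι : Type*} {s : Finset ι} {τ T : ℝ} (hτ : 0 ≤ τ)
    (h : #s * τ ≤ T) (f : ι → ℝ) : τ * (∑ i ∈ s, f i) ^ 2 ≤ T * ∑ i ∈ s, f i ^ 2 := by
  calc τ * (∑ i ∈ s, f i) ^ 2 ≤ τ * (#s * ∑ i ∈ s, f i ^ 2) := by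
        gcongr
        exact sq_sum_le_card_mul_sum_sq
    _ = #s * τ * ∑ i ∈ s, f i ^ 2 := by ring
    _ ≤ T * ∑ i ∈ s, f i ^ 2 := by gcongr

theorem bdf_difference_stability_general {P : ℝ[X]} (hP : IsZeroStable P) {p : ℕ}
    (hdeg : P.natDegree ≤ p) (hp : 1 ≤ p) (T : ℝ) :
    ∃ C : ℝ, ∀ (E : Type*) [SeminormedAddCommGroup E] [NormedSpace ℝ E],
      ∀ τ : ℝ, 0 < τ → ∀ N : ℕ, (N : ℝ) * τ ≤ T →
        ∀ a b : ℕ → E,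
          (∀ n, p ≤ n → n ≤ N →
            (1 / τ) • ∑ j ∈ range (p + 1), P.coeff j • a (n - j) = b n) →
          ∀ n, p ≤ n → n ≤ N →
            ‖a n‖ ^ 2 ≤ C * τ * ∑ j ∈ Icc p n, ‖b j‖ ^ 2 + C * ∑ i ∈ range p, ‖a i‖ ^ 2 := by
  obtain ⟨K, hK⟩ := hP.exists_norm_le hdeg
  refine ⟨2 * K ^ 2 * (p + T), fun E _ _ τ hτ N hN a b hab n hpn hnN => ?_⟩
  have hT : 0 ≤ T := le_trans (by positivity) hN
  set A := ∑ i ∈ range p, ‖a i‖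
  set B := ∑ j ∈ Icc p n, ‖b j‖
  set A₂ := ∑ i ∈ range p, ‖a i‖ ^ 2
  set B₂ := ∑ j ∈ Icc p n, ‖b j‖ ^ 2
  have hnorm : ‖a n‖ ≤ K * (A + τ * B) := by
    have hu (k : ℕ) (hk : k ∈ Icc p n) :
        ‖∑ j ∈ range (p + 1), P.coeff j • a (k - j)‖ = τ * ‖b k‖ := by
      obtain ⟨hpk, hkn⟩ := mem_Icc.mp hk
      rw [← hab k hpk (hkn.trans hnN), norm_smul, Real.norm_of_nonneg (by positivity)]
      field_simp
    simpa only [sum_congr rfl hu, ← mul_sum] using hK E a n hpn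
  have hA : A ^ 2 ≤ p * A₂ := by
    simpa using sq_sum_le_card_mul_sum_sq (s := range p) (f := fun i => ‖a i‖)
  have hB : τ * B ^ 2 ≤ T * B₂ := by
    refine mul_sq_sum_le_of_card_mul_le hτ.le (le_trans ?_ hN) _
    gcongr
    rw [Nat.card_Icc]
    lia
  calc ‖a n‖ ^ 2 ≤ (K * (A + τ * B)) ^ 2 := by gcongr
    _ = K ^ 2 * (A + τ * B) ^ 2 := mul_pow _ _ _
    _ ≤ K ^ 2 * (2 * (A ^ 2 + (τ * B) ^ 2)) := by gcongr; exact add_sq_le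
    _ = 2 * K ^ 2 * (A ^ 2 + τ * (τ * B ^ 2)) := by ring
    _ ≤ 2 * K ^ 2 * (p * A₂ + τ * (T * B₂)) := by gcongr
    _ ≤ 2 * K ^ 2 * ((p + T) * A₂ + τ * ((p + T) * B₂)) := by
        gcongr
        · exact le_add_of_nonneg_right hT
        · exact le_add_of_nonneg_left p.cast_nonneg
    _ = 2 * K ^ 2 * (p + T) * τ * B₂ + 2 * K ^ 2 * (p + T) * A₂ := by ring

/-- **Abstract stability estimate for the BDF difference equation** (part (b) of the proof
of Proposition 5.1): for `1 ≤ p ≤ 6` and `T > 0` there is a constant `C`, depending only on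
`p` and `T`, such that for every real normed vector space `E`, step size `τ > 0` and `N`
with `Nτ ≤ T`, if `(1/τ) ∑_{j=0}^p δ_j a_{n-j} = b_n` for `p ≤ n ≤ N`, then
`‖a n‖² ≤ C τ ∑_{j=p}^n ‖b j‖² + C ∑_{i=0}^{p-1} ‖a i‖²` for `p ≤ n ≤ N`. -/
theorem bdf_difference_stability (p : ℕ) (hp1 : 1 ≤ p) (hp6 : p ≤ 6)
    (T : ℝ) (hT : 0 < T) :
    ∃ C : ℝ, ∀ (E : Type*) [NormedAddCommGroup E] [NormedSpace ℝ E],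
      ∀ τ : ℝ, 0 < τ → ∀ N : ℕ, (N : ℝ) * τ ≤ T →
        ∀ a b : ℕ → E,
          (∀ n, p ≤ n → n ≤ N →
            (1 / τ) • ∑ j ∈ Finset.range (p + 1), (bdfPoly p).coeff j • a (n - j) = b n) →
          ∀ n, p ≤ n → n ≤ N →
            ‖a n‖ ^ 2 ≤ C * τ * ∑ j ∈ Finset.Icc p n, ‖b j‖ ^ 2
              + C * ∑ i ∈ Finset.range p, ‖a i‖ ^ 2 := by
  obtain ⟨C, hC⟩ :=
    bdf_difference_stability_general (isZeroStable_bdfPoly hp1 hp6) (natDegree_bdfPoly_le p) hp1 T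
  exact ⟨C, fun E _ _ => hC E⟩
end
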